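/- arXiv:1005.3908 — 6 statements merged into one kernel-verified Lean document; each statement's English description precedes it below -/
import Mathlib

section
/- Let p be a smooth positive probability density on ℝ^n, let μ = p(x)dx, and let L f = Δf + ∇(log p)·∇f. Assume: (i) there exist a smooth function W : ℝ^n → [1,∞), a C¹ increasing positive function φ on [1,∞), an increasing family of Borel sets (A_r)_{r>0} with ⋃_r A_r = ℝ^n, and constants b ≥ 0, r₀ > 0 such that LW(x) ≤ −φ(W(x)) + b·1_{A_{r₀}}(x) for every x ∈ ℝ^n; (ii) a local super Poincaré inequality holds: there is a function β_loc(r,s), non-increasing in s for each r, such that for every r > 0, every s > 0 and every smooth compactly supported f, ∫_{A_r} f² dμ ≤ s ∫_{ℝ^n} |∇f|² dμ + β_loc(r,s)(∫_{A_r} |f| dμ)²; (iii) there is a C¹ increasing function ψ : [1,∞) → [1,∞) such that 0 < (φ/ψ)'(u) ≤ 1 for every u in the range of W, where (φ/ψ)' is the derivative of u ↦ φ(u)/ψ(u); (iv) G(r) := 1/inf_{x ∈ A_r^c} ψ(W(x)) tends to 0 as r → ∞. Set c_{r₀} := 1 + b·(sup_{x ∈ A_{r₀}} ψ(W(x))/φ(W(x)))/(inf_{x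 ∈ A_{r₀}^c} ψ(W(x))). Then for every s > 0, every r ≥ r₀ with G(r) ≤ s, and every smooth compactly supported f, one has ∫ f² dμ ≤ 2s ∫ |∇f|²/((φ/ψ)'(W)) dμ + c_{r₀}·β_loc(r, s/c_{r₀})·(∫ |f| dμ)². -/
/-!
Integration by parts against `p dx` (`integral_mul_gen`) comes from `p L W = div (p ∇W)`. Applied to
`f² / q` with `∇q = a ∇W` and followed by completing the square, it gives
`∫ (f² / q) (-L W) dμ ≤ ∫ |∇f|² / a dμ` (`integral_sq_div_mul_neg_gen_le`).

Take `q = g(W)` with `g = φ/ψ`, so that `a = g'(W)`. Off `A r` the Lyapunov condition yields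
`f² ≤ G(r) ψ(W) f² ≤ G(r) (f² / g(W)) (-L W)`, and on `A r` the quantity `(f² / g(W)) (-L W)` is at
least `-b M f²` on `A r₀`, with `M = sup_{A r₀} ψ/φ(W)`, and nonnegative elsewhere. Hence
`∫_{(A r)ᶜ} f² dμ ≤ G(r) ∫ |∇f|² / g'(W) dμ + G(r) b M ∫_{A r₀} f² dμ`, and `G(r) b M ≤ c - 1`, where
`c` is the constant `c_{r₀}`. The local super Poincaré inequality at `s / c` on `A r`, together with
`g'(W) ≤ 1`, then bounds `c ∫_{A r} f² dμ`.

Enlarging `∫_{A r} |f| dμ` to the whole space needs `βloc ≥ 0`, which is not a hypothesis. If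
`βloc r t < 0`, then `∫_{A r} u² dμ ≤ t ∫ |∇u|² dμ`, and the case `q = W`, `a = 1` gives
`∫ u² φ(W)/W dμ ≤ (1 + b t) ∫ |∇u|² dμ` for all test functions `u`. Testing with cutoffs on large
balls, whose energy tends to zero, contradicts the positivity of `φ(W)/W`
(`not_integral_sq_mul_le`). The supremum `M` is finite because `g` increases along the range of `W`
(`exists_pos_le_comp`).
-/

open MeasureTheory Real Filter Set
open scoped RealInnerProductSpace

/-- The Laplacian of `f : ℝⁿ → ℝ`, as the trace of the second derivative. -/
noncomputable def lap {n : ℕ} (f : EuclideanSpace ℝ (Fin n) → ℝ)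
    (x : EuclideanSpace ℝ (Fin n)) : ℝ :=
  ∑ i : Fin n, iteratedFDeriv ℝ 2 f x ![EuclideanSpace.single i 1, EuclideanSpace.single i 1]

section Auxiliary

/-! ### Integration by parts and the weighted inequality -/

variable {n : ℕ}

lemma inner_gradient_eq_fderiv (u : EuclideanSpace ℝ (Fin n) → ℝ)
    (x v : EuclideanSpace ℝ (Fin n)) : ⟪gradient u x, v⟫ = fderiv ℝ u x v := by
  simp [gradient]

lemma inner_gradient_gradient (u v : EuclideanSpace ℝ (Fin n) → ℝ)
    (x : EuclideanSpace ℝ (Fin n)) :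
    ⟪gradient u x, gradient v x⟫ = ∑ i : Fin n,
      fderiv ℝ u x (EuclideanSpace.single i 1) * fderiv ℝ v x (EuclideanSpace.single i 1) := by
  rw [← (EuclideanSpace.basisFun (Fin n) ℝ).sum_inner_mul_inner]
  refine Finset.sum_congr rfl fun i _ => ?_
  rw [real_inner_comm (gradient v x), inner_gradient_eq_fderiv, inner_gradient_eq_fderiv,
    EuclideanSpace.basisFun_apply]

lemma continuous_gradient {u : EuclideanSpace ℝ (Fin n) → ℝ} (hu : ContDiff ℝ 1 u) :
    Continuous (gradient u) :=
  (InnerProductSpace.toDual ℝ _).symm.continuous.comp (hu.continuous_fderiv one_ne_zero)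

lemma hasCompactSupport_gradient {u : EuclideanSpace ℝ (Fin n) → ℝ} (hu : HasCompactSupport u) :
    HasCompactSupport (gradient u) :=
  (hu.fderiv (𝕜 := ℝ)).comp_left (g := (InnerProductSpace.toDual ℝ _).symm) (map_zero _)

/-- The generator `L = Δ + ∇(log p)·∇` applied to `W`. -/
noncomputable def gen (p W : EuclideanSpace ℝ (Fin n) → ℝ) (x : EuclideanSpace ℝ (Fin n)) : ℝ :=
  lap W x + ⟪gradient (fun y => Real.log (p y)) x, gradient W x⟫

/-- `p L W = div (p ∇W)`. -/
lemma mul_gen_eq_sum {p W : EuclideanSpace ℝ (Fin n) → ℝ}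
    (hp : ContDiff ℝ (⊤ : ℕ∞) p) (hp_pos : ∀ x, 0 < p x) (hW : ContDiff ℝ (⊤ : ℕ∞) W)
    (x : EuclideanSpace ℝ (Fin n)) :
    p x * gen p W x = ∑ i : Fin n,
      fderiv ℝ (fun y => p y * fderiv ℝ W y (EuclideanSpace.single i 1)) x
        (EuclideanSpace.single i 1) := by
  have hpd : Differentiable ℝ p := hp.differentiable (by simp)
  have hW' : ContDiff ℝ (⊤ : ℕ∞) (fderiv ℝ W) := hW.fderiv_right (by norm_cast)
  have hWd : Differentiable ℝ (fderiv ℝ W) := hW'.differentiable (by simp)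
  rw [gen, inner_gradient_gradient, lap, mul_add, Finset.mul_sum, Finset.mul_sum,
    ← Finset.sum_add_distrib]
  refine Finset.sum_congr rfl fun i _ => ?_
  have h1 : HasFDerivAt (fun y => fderiv ℝ W y (EuclideanSpace.single i 1))
      ((fderiv ℝ (fderiv ℝ W) x).flip (EuclideanSpace.single i 1)) x := by
    simpa using (hWd x).hasFDerivAt.clm_apply (hasFDerivAt_const (EuclideanSpace.single i (1:ℝ)) x)
  have h2 : HasFDerivAt (fun y => p y * fderiv ℝ W y (EuclideanSpace.single i 1)) _ x :=
    (hpd x).hasFDerivAt.mul h1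
  rw [h2.fderiv, ((hpd x).hasFDerivAt.log (hp_pos x).ne').fderiv,
    iteratedFDeriv_two_apply]
  have := (hp_pos x).ne'
  simp
  field_simp

lemma continuous_gen {p W : EuclideanSpace ℝ (Fin n) → ℝ}
    (hp : ContDiff ℝ (⊤ : ℕ∞) p) (hp_pos : ∀ x, 0 < p x) (hW : ContDiff ℝ (⊤ : ℕ∞) W) :
    Continuous (gen p W) := by
  refine .add ?_ (.inner ?_ ?_)
  · refine continuous_finsetSum _ fun i _ => ?_
    have h := hW.continuous_iteratedFDeriv (m := 2) (by norm_cast)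
    fun_prop
  · exact continuous_gradient ((hp.log fun x => (hp_pos x).ne').of_le (by norm_cast))
  · exact continuous_gradient (hW.of_le (by norm_cast))

lemma integral_withDensity_ofReal {p : EuclideanSpace ℝ (Fin n) → ℝ}
    (hp : Continuous p) (hp_pos : ∀ x, 0 < p x) (F : EuclideanSpace ℝ (Fin n) → ℝ) :
    ∫ x, F x ∂(volume.withDensity fun x => ENNReal.ofReal (p x)) = ∫ x, p x * F x := by
  rw [integral_withDensity_eq_integral_toReal_smul (by fun_prop) (by simp)]
  exact integral_congr_ae (.of_forall fun x => by simp [(hp_pos x).le])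

/-- Integration by parts for the generator against a compactly supported `C¹` function. -/
lemma integral_mul_gen {p W h : EuclideanSpace ℝ (Fin n) → ℝ}
    (hp : ContDiff ℝ (⊤ : ℕ∞) p) (hp_pos : ∀ x, 0 < p x) (hW : ContDiff ℝ (⊤ : ℕ∞) W)
    (hh : ContDiff ℝ 1 h) (hhc : HasCompactSupport h) :
    ∫ x, h x * gen p W x ∂(volume.withDensity fun x => ENNReal.ofReal (p x)) =
      - ∫ x, ⟪gradient h x, gradient W x⟫ ∂(volume.withDensity fun x => ENNReal.ofReal (p x)) := by
  rw [integral_withDensity_ofReal hp.continuous hp_pos,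
    integral_withDensity_ofReal hp.continuous hp_pos]
  have hV : ∀ i : Fin n, ContDiff ℝ 1
      (fun y => p y * fderiv ℝ W y (EuclideanSpace.single i 1)) := fun i =>
    (hp.of_le (by norm_cast)).mul
      ((hW.fderiv_right (m := 1) (by norm_cast)).clm_apply contDiff_const)
  have hhd : Continuous (fderiv ℝ h) := hh.continuous_fderiv one_ne_zero
  have hhdc : HasCompactSupport (fderiv ℝ h) := hhc.fderiv (𝕜 := ℝ)
  have hVd : ∀ i : Fin n, Continuous (fderiv ℝ
      (fun y => p y * fderiv ℝ W y (EuclideanSpace.single i 1))) :=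
    fun i => (hV i).continuous_fderiv one_ne_zero
  have hi1 : ∀ i : Fin n, Integrable (fun x => fderiv ℝ h x (EuclideanSpace.single i 1) *
      (p x * fderiv ℝ W x (EuclideanSpace.single i 1))) := fun i => by
    refine Continuous.integrable_of_hasCompactSupport ?_ ?_
    · have := (hV i).continuous
      fun_prop
    · exact HasCompactSupport.mul_right
        (hhdc.mono fun x hx => by
          contrapose! hx
          simp only [Function.mem_support, not_not] at hx ⊢
          simp [hx])
  have hi2 : ∀ i : Fin n, Integrable (fun x => h x * fderiv ℝ
      (fun y => p y * fderiv ℝ W y (EuclideanSpace.single i 1)) x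
        (EuclideanSpace.single i 1)) := fun i => by
    refine Continuous.integrable_of_hasCompactSupport ?_ hhc.mul_right
    have := hh.continuous
    have := hVd i
    fun_prop
  have hi3 : ∀ i : Fin n, Integrable (fun x => h x *
      (p x * fderiv ℝ W x (EuclideanSpace.single i 1))) := fun i =>
    Continuous.integrable_of_hasCompactSupport (hh.continuous.mul (hV i).continuous) hhc.mul_right
  calc ∫ x, p x * (h x * gen p W x)
      = ∫ x, ∑ i : Fin n, h x * fderiv ℝ
          (fun y => p y * fderiv ℝ W y (EuclideanSpace.single i 1)) x
          (EuclideanSpace.single i 1) := by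
        refine integral_congr_ae (.of_forall fun x => ?_)
        simp only
        rw [← Finset.mul_sum, ← mul_gen_eq_sum hp hp_pos hW]
        ring
    _ = ∑ i : Fin n, ∫ x, h x * fderiv ℝ
          (fun y => p y * fderiv ℝ W y (EuclideanSpace.single i 1)) x
          (EuclideanSpace.single i 1) := integral_finsetSum _ fun i _ => hi2 i
    _ = ∑ i : Fin n, - ∫ x, fderiv ℝ h x (EuclideanSpace.single i 1) *
          (p x * fderiv ℝ W x (EuclideanSpace.single i 1)) :=
        Finset.sum_congr rfl fun i _ => integral_mul_fderiv_eq_neg_fderiv_mul_of_integrable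
          (hi1 i) (hi2 i) (hi3 i) (fun x _ => hh.differentiable one_ne_zero x)
          (fun x _ => (hV i).differentiable one_ne_zero x)
    _ = - ∫ x, p x * ⟪gradient h x, gradient W x⟫ := by
        rw [Finset.sum_neg_distrib, ← integral_finsetSum _ fun i _ => hi1 i]
        congr 1
        refine integral_congr_ae (.of_forall fun x => ?_)
        simp only
        rw [inner_gradient_gradient, Finset.mul_sum]
        exact Finset.sum_congr rfl fun i _ => by ring

/-- Completing the square: the pointwise bound behind the weighted inequality. -/
lemma inner_sub_le_div {E : Type*} [NormedAddCommGroup E] [InnerProductSpace ℝ E]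
    (u v : E) {a t : ℝ} (ha : 0 < a) :
    2 * t * ⟪u, v⟫ - t ^ 2 * a * ‖v‖ ^ 2 ≤ ‖u‖ ^ 2 / a := by
  rw [le_div_iff₀ ha]
  have h := norm_sub_sq_real u ((a * t) • v)
  rw [real_inner_smul_right, norm_smul, mul_pow, Real.norm_eq_abs, sq_abs] at h
  nlinarith [sq_nonneg ‖u - (a * t) • v‖]

/-- If `q > 0` is `C¹` with `∇q = a ∇W` and `a > 0`, then
`∫ (f² / q) (-L W) dμ ≤ ∫ |∇f|² / a dμ`. It is applied with `q = (φ/ψ)(W)` and with `q = W`. -/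
lemma integral_sq_div_mul_neg_gen_le {p W q a f : EuclideanSpace ℝ (Fin n) → ℝ}
    (hp : ContDiff ℝ (⊤ : ℕ∞) p) (hp_pos : ∀ x, 0 < p x)
    (hμ : IsProbabilityMeasure (volume.withDensity fun x => ENNReal.ofReal (p x)))
    (hW : ContDiff ℝ (⊤ : ℕ∞) W) (hq_pos : ∀ x, 0 < q x)
    (hqd : ∀ x, HasFDerivAt q (a x • fderiv ℝ W x) x) (ha : Continuous a) (ha_pos : ∀ x, 0 < a x)
    (hf : ContDiff ℝ (⊤ : ℕ∞) f) (hfc : HasCompactSupport f) :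
    ∫ x, f x ^ 2 / q x * -gen p W x ∂(volume.withDensity fun x => ENNReal.ofReal (p x)) ≤
      ∫ x, ‖gradient f x‖ ^ 2 / a x ∂(volume.withDensity fun x => ENNReal.ofReal (p x)) := by
  have hq : ContDiff ℝ 1 q := by
    rw [contDiff_one_iff_fderiv]
    refine ⟨fun x => (hqd x).differentiableAt, ?_⟩
    rw [funext fun x => (hqd x).fderiv]
    exact ha.smul (hW.continuous_fderiv (by simp))
  have hf1 : ContDiff ℝ 1 f := hf.of_le (by norm_cast)
  have hW1 : ContDiff ℝ 1 W := hW.of_le (by norm_cast)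
  have hh : ContDiff ℝ 1 (fun x => f x ^ 2 / q x) := (hf1.pow 2).div hq fun x => (hq_pos x).ne'
  have hhc : HasCompactSupport (fun x => f x ^ 2 / q x) := by
    have h0 : (fun x => f x ^ 2 / q x) = fun x => f x * (f x / q x) := by ext x; ring
    rw [h0]
    exact hfc.mul_right
  have hgc := hasCompactSupport_gradient hhc
  have hfgc := hasCompactSupport_gradient hfc
  simp only [mul_neg]
  rw [integral_neg, integral_mul_gen hp hp_pos hW hh hhc, neg_neg]
  refine integral_mono ?_ ?_ fun x => ?_
  · refine Continuous.integrable_of_hasCompactSupport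
      ((continuous_gradient hh).inner (continuous_gradient hW1)) ?_
    exact hgc.mono fun x hx => by
      contrapose! hx
      simp only [Function.mem_support, not_not] at hx ⊢
      simp [hx]
  · refine Continuous.integrable_of_hasCompactSupport
      (((continuous_gradient hf1).norm.pow 2).div ha fun x => (ha_pos x).ne') ?_
    exact hfgc.mono fun x hx => by
      contrapose! hx
      simp only [Function.mem_support, not_not] at hx ⊢
      simp [hx]
  · simp only
    have hqx := (hq_pos x).ne'
    have hder : HasFDerivAt (fun x => f x ^ 2 * (q x)⁻¹) _ x :=
      ((hf1.differentiable one_ne_zero x).hasFDerivAt.pow 2).mul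
        ((hasDerivAt_inv hqx).comp_hasFDerivAt x (hqd x))
    simp only [← div_eq_mul_inv] at hder
    rw [inner_gradient_eq_fderiv, hder.fderiv]
    refine le_trans (le_of_eq ?_)
      (inner_sub_le_div (gradient f x) (gradient W x) (t := f x / q x) (ha_pos x))
    rw [← real_inner_self_eq_norm_sq, inner_gradient_eq_fderiv, inner_gradient_eq_fderiv]
    simp
    field_simp
    ring

/-! ### Cutoffs and lower bounds -/

/-- Cutoff functions equal to `1` on the ball of radius `R` with gradient of size `O(1/R)`. -/
lemma exists_cutoff (n : ℕ) : ∃ C : ℝ, ∀ R : ℝ, 1 ≤ R →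
    ∃ χ : EuclideanSpace ℝ (Fin n) → ℝ, ContDiff ℝ (⊤ : ℕ∞) χ ∧ HasCompactSupport χ ∧
      (∀ x, 0 ≤ χ x) ∧ (∀ x, χ x ≤ 1) ∧ (∀ x, ‖x‖ ≤ R → χ x = 1) ∧
      ∀ x, ‖gradient χ x‖ ≤ C / R := by
  let η : ContDiffBump (0 : EuclideanSpace ℝ (Fin n)) := ⟨1, 2, one_pos, one_lt_two⟩
  have hη : ContDiff ℝ (⊤ : ℕ∞) η := η.contDiff
  obtain ⟨C, hC⟩ := (hη.continuous_fderiv (by simp)).bounded_above_of_compact_support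
    (η.hasCompactSupport.fderiv (𝕜 := ℝ))
  refine ⟨C, fun R hR => ?_⟩
  have hR0 : 0 < R := one_pos.trans_le hR
  refine ⟨fun x => η (R⁻¹ • x), hη.comp (contDiff_const_smul _), ?_, fun x => η.nonneg,
    fun x => η.le_one, fun x hx => ?_, fun x => ?_⟩
  · exact η.hasCompactSupport.comp_homeomorph (Homeomorph.smulOfNeZero R⁻¹ (inv_ne_zero hR0.ne'))
  · refine η.one_of_mem_closedBall ?_
    rw [mem_closedBall_zero_iff, norm_smul, norm_inv, Real.norm_of_nonneg hR0.le]
    change R⁻¹ * ‖x‖ ≤ 1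
    rw [inv_mul_le_iff₀ hR0]
    simpa using hx
  · have hd : HasFDerivAt (fun x => η (R⁻¹ • x))
        ((fderiv ℝ η (R⁻¹ • x)).comp (R⁻¹ • ContinuousLinearMap.id ℝ _)) x :=
      (hη.differentiable (by simp) (R⁻¹ • x)).hasFDerivAt.comp x
        ((hasFDerivAt_id x).const_smul R⁻¹)
    rw [gradient, LinearIsometryEquiv.norm_map, hd.fderiv, ContinuousLinearMap.comp_smul,
      ContinuousLinearMap.comp_id, norm_smul, norm_inv, Real.norm_of_nonneg hR0.le, div_eq_inv_mul]
    gcongr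
    exact hC _

/-- A Hardy-type inequality `∫ f² h dμ ≤ K ∫ |∇f|² dμ` with `h > 0` fails for a probability
measure `μ` charging open sets, since cutoff functions have arbitrarily small energy. -/
lemma not_integral_sq_mul_le {μ : Measure (EuclideanSpace ℝ (Fin n))} [IsProbabilityMeasure μ]
    [μ.IsOpenPosMeasure] {h : EuclideanSpace ℝ (Fin n) → ℝ} (hh : Continuous h)
    (hh_pos : ∀ x, 0 < h x) {K : ℝ} (hK : 0 ≤ K) :
    ¬ ∀ f : EuclideanSpace ℝ (Fin n) → ℝ, ContDiff ℝ (⊤ : ℕ∞) f → HasCompactSupport f →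
      ∫ x, f x ^ 2 * h x ∂μ ≤ K * ∫ x, ‖gradient f x‖ ^ 2 ∂μ := by
  intro H
  obtain ⟨C, hC⟩ := exists_cutoff n
  obtain ⟨f, hf, hfc, hf0, hf1, hf_one, -⟩ := hC 1 le_rfl
  have hint : ∀ g : EuclideanSpace ℝ (Fin n) → ℝ, Continuous g → HasCompactSupport g →
      Integrable (fun x => g x ^ 2 * h x) μ := fun g hg hgc => by
    refine Continuous.integrable_of_hasCompactSupport (by fun_prop) ?_
    simp only [pow_two, mul_assoc]
    exact hgc.mul_right
  have hpos : 0 < ∫ x, f x ^ 2 * h x ∂μ := by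
    refine Continuous.integral_pos_of_hasCompactSupport_nonneg_nonzero (x := 0)
      ((hf.continuous.pow 2).mul hh) ?_ (fun x => mul_nonneg (sq_nonneg _) (hh_pos x).le) ?_
    · simp only [pow_two, mul_assoc]
      exact hfc.mul_right
    · simpa [hf_one 0 (by simp)] using (hh_pos 0).ne'
  obtain ⟨R₀, hR₀⟩ := hfc.isCompact.isBounded.exists_norm_le
  have key : ∀ R : ℝ, max 1 R₀ ≤ R → ∫ x, f x ^ 2 * h x ∂μ ≤ K * (C / R) ^ 2 := by
    intro R hR
    obtain ⟨χ, hχ, hχc, hχ0, hχ1, hχ_one, hχ_grad⟩ := hC R ((le_max_left _ _).trans hR)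
    calc ∫ x, f x ^ 2 * h x ∂μ ≤ ∫ x, χ x ^ 2 * h x ∂μ := by
          refine integral_mono (hint f hf.continuous hfc) (hint χ hχ.continuous hχc) fun x => ?_
          refine mul_le_mul_of_nonneg_right (pow_le_pow_left₀ (hf0 x) ?_ 2) (hh_pos x).le
          by_cases hx : x ∈ tsupport f
          · rw [hχ_one x ((hR₀ x hx).trans ((le_max_right _ _).trans hR))]
            exact hf1 x
          · rw [image_eq_zero_of_notMem_tsupport hx]
            exact hχ0 x
      _ ≤ K * ∫ x, ‖gradient χ x‖ ^ 2 ∂μ := H χ hχ hχc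
      _ ≤ K * (C / R) ^ 2 := by
          refine mul_le_mul_of_nonneg_left ?_ hK
          have hb : ∫ x, ‖gradient χ x‖ ^ 2 ∂μ ≤ ∫ _, (C / R) ^ 2 ∂μ := by
            refine integral_mono_of_nonneg (.of_forall fun x => sq_nonneg _)
              (integrable_const _) (.of_forall fun x => ?_)
            exact pow_le_pow_left₀ (norm_nonneg _) (hχ_grad x) 2
          simpa using hb
  have hlim : Tendsto (fun R : ℝ => K * (C / R) ^ 2) atTop (nhds 0) := by
    simpa using ((tendsto_const_nhds (x := C)).div_atTop tendsto_id).pow 2 |>.const_mul K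
  exact absurd (ge_of_tendsto hlim ((eventually_ge_atTop (max 1 R₀)).mono key)) (not_le.2 hpos)

/-- A continuous positive function on `[1, ∞)` whose derivative is positive on the range of a
continuous `W ≥ 1` is bounded below along `W` by a positive constant. -/
lemma exists_pos_le_comp {W : EuclideanSpace ℝ (Fin n) → ℝ} (hW : Continuous W)
    (hW_one : ∀ x, 1 ≤ W x) {g : ℝ → ℝ} (hg : ContinuousOn g (Ici 1))
    (hg_pos : ∀ u ≥ (1 : ℝ), 0 < g u) (hD : ∀ x, 0 < deriv g (W x)) :
    ∃ m > 0, ∀ x, m ≤ g (W x) := by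
  obtain ⟨u, hu, hmin⟩ := isCompact_Icc.exists_isMinOn (nonempty_Icc.2 (hW_one 0))
    (hg.mono Icc_subset_Ici_self)
  have hsub : range W ⊆ Ici 1 := by rintro _ ⟨x, rfl⟩; exact hW_one x
  have hmono : MonotoneOn g (range W) := by
    refine monotoneOn_of_deriv_nonneg
      (isPreconnected_range hW).ordConnected.convex (hg.mono hsub) ?_ ?_
    · intro y hy
      obtain ⟨x, rfl⟩ := interior_subset hy
      exact (differentiableAt_of_deriv_ne_zero (hD x).ne').differentiableWithinAt
    · intro y hy
      obtain ⟨x, rfl⟩ := interior_subset hy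
      exact (hD x).le
  refine ⟨g u, hg_pos u hu.1, fun x => ?_⟩
  rcases le_total (W x) (W 0) with h | h
  · exact hmin ⟨hW_one x, h⟩
  · exact (hmin (right_mem_Icc.2 (hW_one 0))).trans (hmono ⟨0, rfl⟩ ⟨x, rfl⟩ h)

end Auxiliary

/-! ### The super weighted Poincaré inequality -/

/-- **Main Theorem** (Theorem 2.1 of the paper), specialized to `L = Δ + ∇(log p)·∇` on `ℝⁿ`:
a `φ`-Lyapunov condition plus a local super Poincaré inequality implies a super weighted
Poincaré inequality with weight `1/((φ/ψ)'(W))` and rate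
`β̃(s) = c_{r₀} β_loc(G⁻¹(s), s/c_{r₀})`. The conclusion is stated for every `r ≥ r₀` with
`G(r) ≤ s` (in particular for `r = G⁻¹(s)`). -/
theorem super_weighted_poincare_of_lyapunov {n : ℕ}
    (p : EuclideanSpace ℝ (Fin n) → ℝ)
    (hp_smooth : ContDiff ℝ (⊤ : ℕ∞) p) (hp_pos : ∀ x, 0 < p x)
    (μ : Measure (EuclideanSpace ℝ (Fin n)))
    (hμ : μ = volume.withDensity (fun x => ENNReal.ofReal (p x)))
    (hμ_prob : IsProbabilityMeasure μ)
    -- the Lyapunov function and the functions φ, ψ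
    (W : EuclideanSpace ℝ (Fin n) → ℝ)
    (hW_smooth : ContDiff ℝ (⊤ : ℕ∞) W) (hW_one : ∀ x, 1 ≤ W x)
    (φ ψ : ℝ → ℝ)
    (hφ_diff : ContDiffOn ℝ 1 φ (Set.Ici 1))
    (hφ_pos : ∀ u ≥ (1:ℝ), 0 < φ u)
    (hφ_mono : StrictMonoOn φ (Set.Ici 1))
    (hψ_diff : ContDiffOn ℝ 1 ψ (Set.Ici 1))
    (hψ_one : ∀ u ≥ (1:ℝ), 1 ≤ ψ u)
    (hψ_mono : StrictMonoOn ψ (Set.Ici 1))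
    -- (iii) : 0 < (φ/ψ)'(u) ≤ 1 on the range of W
    (hD : ∀ x, 0 < deriv (fun u => φ u / ψ u) (W x) ∧
          deriv (fun u => φ u / ψ u) (W x) ≤ 1)
    -- the exhausting family of sets
    (A : ℝ → Set (EuclideanSpace ℝ (Fin n)))
    (hA_meas : ∀ r, MeasurableSet (A r))
    (hA_mono : ∀ r r', r ≤ r' → A r ⊆ A r')
    (hA_exhaust : ⋃ r > (0:ℝ), A r = Set.univ)
    -- (i) the Lyapunov condition  LW ≤ -φ(W) + b 1_{A_{r₀}}
    (b r₀ : ℝ) (hb : 0 ≤ b) (hr₀ : 0 < r₀)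
    (hLyap : ∀ x, lap W x + ⟪gradient (fun y => Real.log (p y)) x, gradient W x⟫
        ≤ -φ (W x) + b * (A r₀).indicator (fun _ => (1:ℝ)) x)
    -- (ii) the local super Poincaré inequality
    (βloc : ℝ → ℝ → ℝ)
    (hβloc_anti : ∀ r, AntitoneOn (fun s => βloc r s) (Set.Ioi 0))
    (hSPloc : ∀ r > (0:ℝ), ∀ s > (0:ℝ), ∀ f : EuclideanSpace ℝ (Fin n) → ℝ,
        ContDiff ℝ (⊤ : ℕ∞) f → HasCompactSupport f →
        ∫ x in A r, (f x) ^ 2 ∂μ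
          ≤ s * ∫ x, ‖gradient f x‖ ^ 2 ∂μ + βloc r s * (∫ x in A r, |f x| ∂μ) ^ 2)
    -- (iv) G(r) = 1/inf_{A_rᶜ} ψ(W) tends to 0 at infinity
    (hG_tendsto : Tendsto (fun r => 1 / ⨅ x : ↥((A r)ᶜ), ψ (W (x : EuclideanSpace ℝ (Fin n))))
        atTop (nhds 0)) :
    -- conclusion: the super weighted Poincaré inequality
    ∀ s > (0:ℝ), ∀ r ≥ r₀,
      (1 / ⨅ x : ↥((A r)ᶜ), ψ (W (x : EuclideanSpace ℝ (Fin n)))) ≤ s →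
      ∀ f : EuclideanSpace ℝ (Fin n) → ℝ, ContDiff ℝ (⊤ : ℕ∞) f → HasCompactSupport f →
      ∫ x, (f x) ^ 2 ∂μ
        ≤ 2 * s * (∫ x, ‖gradient f x‖ ^ 2 / deriv (fun u => φ u / ψ u) (W x) ∂μ)
          + (1 + b * (⨆ x : ↥(A r₀), ψ (W (x : EuclideanSpace ℝ (Fin n)))
                        / φ (W (x : EuclideanSpace ℝ (Fin n))))
                  / ⨅ x : ↥((A r₀)ᶜ), ψ (W (x : EuclideanSpace ℝ (Fin n))))
            * βloc r (s / (1 + b * (⨆ x : ↥(A r₀), ψ (W (x : EuclideanSpace ℝ (Fin n)))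
                        / φ (W (x : EuclideanSpace ℝ (Fin n))))
                  / ⨅ x : ↥((A r₀)ᶜ), ψ (W (x : EuclideanSpace ℝ (Fin n)))))
            * (∫ x, |f x| ∂μ) ^ 2 := by
  subst hμ
  intro s hs r hr hGs f hf hfc
  have hr_pos : 0 < r := hr₀.trans_le hr
  set μ := volume.withDensity fun x => ENNReal.ofReal (p x) with hμ
  have hμ_open : μ.IsOpenPosMeasure := by
    have hp_cont := hp_smooth.continuous
    have hac : volume ≪ μ := withDensity_absolutelyContinuous'
      (Measurable.aemeasurable (by fun_prop)) (.of_forall fun x => by simpa using hp_pos x)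
    exact hac.isOpenPosMeasure
  set g : ℝ → ℝ := fun u => φ u / ψ u with hg
  have hψ_pos : ∀ u ≥ (1:ℝ), 0 < ψ u := fun u hu => one_pos.trans_le (hψ_one u hu)
  have hg_diff : ContDiffOn ℝ 1 g (Ici 1) := hφ_diff.div hψ_diff fun u hu => (hψ_pos u hu).ne'
  have hg_pos : ∀ u ≥ (1:ℝ), 0 < g u := fun u hu => div_pos (hφ_pos u hu) (hψ_pos u hu)
  have hW_cont := hW_smooth.continuous
  have hdiff : ∀ x, DifferentiableAt ℝ g (W x) := fun x =>
    differentiableAt_of_deriv_ne_zero (hD x).1.ne'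
  -- `g` is only controlled on `[1, ∞)`, but where `W = 1` its derivative is nonzero, so `g` is
  -- differentiable there and `deriv g` is the one-sided derivative: `deriv g ∘ W` is continuous.
  have ha_cont : Continuous fun x => deriv g (W x) := by
    have h1 : (fun x => deriv g (W x)) = fun x => derivWithin g (Ici 1) (W x) := by
      ext x
      exact ((hdiff x).derivWithin (uniqueDiffOn_Ici 1 _ (hW_one x))).symm
    rw [h1]
    exact (hg_diff.continuousOn_derivWithin (uniqueDiffOn_Ici 1) le_rfl).comp_continuous hW_cont
      hW_one
  have hgen_cont := continuous_gen hp_smooth hp_pos hW_smooth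
  have hWd : ∀ x, HasFDerivAt W (fderiv ℝ W x) x := fun x =>
    (hW_smooth.differentiable (by simp) x).hasFDerivAt
  have hφW : Continuous fun x => φ (W x) := hφ_diff.continuousOn.comp_continuous hW_cont hW_one
  have hgW : Continuous fun x => g (W x) := hg_diff.continuousOn.comp_continuous hW_cont hW_one
  have hW_pos : ∀ x, 0 < W x := fun x => one_pos.trans_le (hW_one x)
  have hgrad_int : ∀ {u : EuclideanSpace ℝ (Fin n) → ℝ}, ContDiff ℝ (⊤ : ℕ∞) u →
      HasCompactSupport u → ∀ {c : EuclideanSpace ℝ (Fin n) → ℝ}, Continuous c →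
      Integrable (fun x => ‖gradient u x‖ ^ 2 * c x) μ := by
    intro u hu huc c hc
    refine Continuous.integrable_of_hasCompactSupport
      (((continuous_gradient (hu.of_le (by norm_cast))).norm.pow 2).mul hc) ?_
    exact (hasCompactSupport_gradient huc).mono fun x hx => by
      contrapose! hx
      simp only [Function.mem_support, not_not] at hx ⊢
      simp [hx]
  have hsq_int : ∀ {u : EuclideanSpace ℝ (Fin n) → ℝ}, ContDiff ℝ (⊤ : ℕ∞) u →
      HasCompactSupport u → ∀ {c : EuclideanSpace ℝ (Fin n) → ℝ}, Continuous c →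
      Integrable (fun x => u x ^ 2 * c x) μ := by
    intro u hu huc c hc
    refine Continuous.integrable_of_hasCompactSupport ((hu.continuous.pow 2).mul hc) ?_
    simp only [pow_two, mul_assoc]
    exact huc.mul_right
  have hsq_int' : ∀ {u : EuclideanSpace ℝ (Fin n) → ℝ}, ContDiff ℝ (⊤ : ℕ∞) u →
      HasCompactSupport u → Integrable (fun x => u x ^ 2) μ := fun hu huc => by
    simpa using hsq_int hu huc (continuous_const (y := (1:ℝ)))
  have hneg : ∀ x, φ (W x) - b * (A r₀).indicator (fun _ => (1:ℝ)) x ≤ -gen p W x := fun x => by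
    have := hLyap x
    rw [← gen] at this
    linarith
  have hind : ∀ x, (A r₀).indicator (fun _ => (1:ℝ)) x ≤ (A r).indicator (fun _ => (1:ℝ)) x :=
    fun x => indicator_le_indicator_of_subset (hA_mono _ _ hr) (fun _ => zero_le_one) x
  have hind0 : ∀ r x, 0 ≤ (A r).indicator (fun _ => (1:ℝ)) x := fun r x =>
    indicator_nonneg (fun _ _ => zero_le_one) x
  have hind_int : ∀ r, ∀ {u : EuclideanSpace ℝ (Fin n) → ℝ}, ContDiff ℝ (⊤ : ℕ∞) u →
      HasCompactSupport u →
      Integrable (fun x => u x ^ 2 * (A r).indicator (fun _ => (1:ℝ)) x) μ := by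
    intro r u hu huc
    have : (fun x => u x ^ 2 * (A r).indicator (fun _ => (1:ℝ)) x) =
        (A r).indicator fun x => u x ^ 2 := by
      ext x
      by_cases hx : x ∈ A r <;> simp [hx]
    rw [this]
    exact (hsq_int' hu huc).indicator (hA_meas r)
  have hind_eq : ∀ r, ∀ u : EuclideanSpace ℝ (Fin n) → ℝ,
      ∫ x, u x ^ 2 * (A r).indicator (fun _ => (1:ℝ)) x ∂μ = ∫ x in A r, u x ^ 2 ∂μ := by
    intro r u
    rw [← integral_indicator (hA_meas r)]
    congr 1
    ext x
    by_cases hx : x ∈ A r <;> simp [hx]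
  -- A negative constant could be dropped from the local inequality; combined with the Lyapunov
  -- condition this would give a Hardy inequality for the finite measure `μ`.
  have hβ : ∀ t > (0:ℝ), 0 ≤ βloc r t := by
    intro t ht
    by_contra! hneg_β
    refine not_integral_sq_mul_le (μ := μ) (h := fun x => φ (W x) / W x)
      (hφW.div hW_cont fun x => (hW_pos x).ne')
      (fun x => div_pos (hφ_pos _ (hW_one x)) (hW_pos x)) (K := 1 + b * t) (by positivity) ?_
    intro u hu huc
    have h1 : ∫ x in A r, u x ^ 2 ∂μ ≤ t * ∫ x, ‖gradient u x‖ ^ 2 ∂μ := by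
      have := hSPloc r hr_pos t ht u hu huc
      have := mul_nonneg (neg_nonneg.2 hneg_β.le) (sq_nonneg (∫ x in A r, |u x| ∂μ))
      linarith
    have h2 := integral_sq_div_mul_neg_gen_le hp_smooth hp_pos hμ_prob hW_smooth hW_pos
      (a := fun _ => 1) (fun x => by simpa using hWd x) continuous_const
      (fun _ => one_pos) hu huc
    simp only [div_one] at h2
    have hint : Integrable (fun x => u x ^ 2 / W x * -gen p W x) μ := by
      have := hsq_int hu huc ((hW_cont.inv₀ fun x => (hW_pos x).ne').mul hgen_cont.neg)
      refine this.congr (.of_forall fun x => ?_)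
      simp only [div_eq_mul_inv, Pi.mul_apply, Pi.inv_apply, Pi.neg_apply]
      ring
    calc ∫ x, u x ^ 2 * (φ (W x) / W x) ∂μ
        ≤ ∫ x, (u x ^ 2 / W x * -gen p W x
            + b * (u x ^ 2 * (A r).indicator (fun _ => (1:ℝ)) x)) ∂μ := by
          refine integral_mono
            (hsq_int hu huc (hφW.div hW_cont fun x => (hW_pos x).ne'))
            (hint.add ((hind_int r hu huc).const_mul b)) fun x => ?_
          have e1 : u x ^ 2 / W x * (φ (W x) - b * (A r₀).indicator (fun _ => (1:ℝ)) x) ≤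
              u x ^ 2 / W x * -gen p W x :=
            mul_le_mul_of_nonneg_left (hneg x) (div_nonneg (sq_nonneg _) (hW_pos x).le)
          have e2 : u x ^ 2 / W x * (A r₀).indicator (fun _ => (1:ℝ)) x ≤
              u x ^ 2 * (A r).indicator (fun _ => (1:ℝ)) x :=
            mul_le_mul (div_le_self (sq_nonneg _) (hW_one x)) (hind x) (hind0 _ _) (sq_nonneg _)
          have e3 := mul_le_mul_of_nonneg_left e2 hb
          have e4 : u x ^ 2 * (φ (W x) / W x) = u x ^ 2 / W x * φ (W x) := by ring
          simp only
          rw [e4]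
          linarith
      _ = ∫ x, u x ^ 2 / W x * -gen p W x ∂μ + b * ∫ x in A r, u x ^ 2 ∂μ := by
          rw [integral_add hint ((hind_int r hu huc).const_mul b), integral_const_mul, hind_eq]
      _ ≤ (1 + b * t) * ∫ x, ‖gradient u x‖ ^ 2 ∂μ := by
          have := mul_le_mul_of_nonneg_left h1 hb
          linarith
  -- The constants: `M = sup_{A_{r₀}} ψ/φ(W)`, `I ρ = inf_{A_ρᶜ} ψ(W)` (zero if `A_ρ` is everything).
  obtain ⟨m, hm, hmg⟩ := exists_pos_le_comp hW_cont hW_one hg_diff.continuousOn hg_pos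
    fun x => (hD x).1
  set M : ℝ := ⨆ x : ↥(A r₀), ψ (W (x : EuclideanSpace ℝ (Fin n)))
    / φ (W (x : EuclideanSpace ℝ (Fin n))) with hM
  have hinv : ∀ x, ψ (W x) / φ (W x) = (g (W x))⁻¹ := fun x => by simp [hg]
  have hM_le : ∀ x ∈ A r₀, (g (W x))⁻¹ ≤ M := by
    intro x hx
    rw [← hinv]
    refine le_ciSup (f := fun x : ↥(A r₀) => ψ (W (x : EuclideanSpace ℝ (Fin n)))
      / φ (W (x : EuclideanSpace ℝ (Fin n)))) ⟨m⁻¹, ?_⟩ ⟨x, hx⟩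
    rintro _ ⟨y, rfl⟩
    simp only [hinv]
    exact inv_anti₀ hm (hmg y)
  have hM0 : 0 ≤ M := Real.iSup_nonneg fun x =>
    div_nonneg (hψ_pos _ (hW_one x)).le (hφ_pos _ (hW_one x)).le
  set I : ℝ → ℝ := fun ρ => ⨅ x : ↥((A ρ)ᶜ), ψ (W (x : EuclideanSpace ℝ (Fin n))) with hI
  have hI0 : ∀ ρ, 0 ≤ I ρ := fun ρ => Real.iInf_nonneg fun x => (hψ_pos _ (hW_one x)).le
  have hI_le : ∀ ρ, ∀ x ∉ A ρ, I ρ ≤ ψ (W x) := by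
    intro ρ x hx
    refine ciInf_le (f := fun x : ↥((A ρ)ᶜ) => ψ (W (x : EuclideanSpace ℝ (Fin n))))
      ⟨0, ?_⟩ ⟨x, hx⟩
    rintro _ ⟨y, rfl⟩
    exact (hψ_pos _ (hW_one y)).le
  have hI1 : ∀ ρ, ∀ x ∉ A ρ, 1 ≤ I ρ := by
    intro ρ x hx
    have : Nonempty ↥((A ρ)ᶜ) := ⟨⟨x, hx⟩⟩
    exact le_ciInf fun y => hψ_one _ (hW_one y)
  change 1 / I r ≤ s at hGs
  change ∫ x, f x ^ 2 ∂μ ≤ 2 * s * (∫ x, ‖gradient f x‖ ^ 2 / deriv g (W x) ∂μ)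
    + (1 + b * M / I r₀) * βloc r (s / (1 + b * M / I r₀)) * (∫ x, |f x| ∂μ) ^ 2
  set G : ℝ := 1 / I r with hG
  have hG0 : 0 ≤ G := div_nonneg zero_le_one (hI0 r)
  have hGM : G * (b * M) ≤ b * M / I r₀ := by
    by_cases hfull : ∃ x, x ∉ A r
    · obtain ⟨x, hx⟩ := hfull
      have h1 : I r₀ ≤ I r := by
        have : Nonempty ↥((A r)ᶜ) := ⟨⟨x, hx⟩⟩
        exact le_ciInf fun y => hI_le r₀ y fun hy => y.2 (hA_mono _ _ hr hy)
      have h2 : 0 < I r₀ := one_pos.trans_le (hI1 r₀ x fun hx' => hx (hA_mono _ _ hr hx'))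
      rw [div_eq_mul_one_div (b * M), mul_comm G]
      exact mul_le_mul_of_nonneg_left (one_div_le_one_div_of_le h2 h1) (mul_nonneg hb hM0)
    -- An infimum over the empty set is zero, and so is its inverse `G`.
    · push Not at hfull
      have : IsEmpty ↥((A r)ᶜ) := ⟨fun x => x.2 (hfull x)⟩
      have hz : G = 0 := by simp [hG, hI, Real.iInf_of_isEmpty]
      rw [hz, zero_mul]
      exact div_nonneg (mul_nonneg hb hM0) (hI0 _)
  set c : ℝ := 1 + b * M / I r₀ with hc
  have hc1 : 1 ≤ c := le_add_of_nonneg_right (div_nonneg (mul_nonneg hb hM0) (hI0 _))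
  have hc_pos : 0 < c := one_pos.trans_le hc1
  have hgW_pos : ∀ x, 0 < g (W x) := fun x => hg_pos _ (hW_one x)
  have hlyap_int := integral_sq_div_mul_neg_gen_le hp_smooth hp_pos hμ_prob hW_smooth hgW_pos
    (a := fun x => deriv g (W x)) (fun x => (hdiff x).hasDerivAt.comp_hasFDerivAt x (hWd x))
    ha_cont (fun x => (hD x).1) hf hfc
  have hint : Integrable (fun x => f x ^ 2 / g (W x) * -gen p W x) μ := by
    have := hsq_int hf hfc ((hgW.inv₀ fun x => (hgW_pos x).ne').mul hgen_cont.neg)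
    refine this.congr (.of_forall fun x => ?_)
    simp only [div_eq_mul_inv, Pi.mul_apply, Pi.inv_apply, Pi.neg_apply]
    ring
  set D : ℝ := ∫ x, ‖gradient f x‖ ^ 2 / deriv g (W x) ∂μ with hDdef
  have hD0 : 0 ≤ D := integral_nonneg fun x => div_nonneg (sq_nonneg _) (hD x).1.le
  have hout : ∫ x, f x ^ 2 ∂μ - ∫ x in A r, f x ^ 2 ∂μ
      ≤ G * D + G * (b * M) * ∫ x in A r₀, f x ^ 2 ∂μ := by
    calc ∫ x, f x ^ 2 ∂μ - ∫ x in A r, f x ^ 2 ∂μ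
        = ∫ x, (f x ^ 2 - f x ^ 2 * (A r).indicator (fun _ => (1:ℝ)) x) ∂μ := by
          rw [integral_sub (hsq_int' hf hfc) (hind_int r hf hfc), hind_eq]
      _ ≤ ∫ x, (G * (f x ^ 2 / g (W x) * -gen p W x)
            + G * (b * M) * (f x ^ 2 * (A r₀).indicator (fun _ => (1:ℝ)) x)) ∂μ := by
          refine integral_mono ((hsq_int' hf hfc).sub (hind_int r hf hfc))
            ((hint.const_mul G).add ((hind_int r₀ hf hfc).const_mul _)) fun x => ?_
          have e1 : f x ^ 2 / g (W x) * (φ (W x) - b * (A r₀).indicator (fun _ => (1:ℝ)) x) ≤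
              f x ^ 2 / g (W x) * -gen p W x :=
            mul_le_mul_of_nonneg_left (hneg x) (div_nonneg (sq_nonneg _) (hgW_pos x).le)
          have e2 : f x ^ 2 / g (W x) * φ (W x) = f x ^ 2 * ψ (W x) := by
            have := (hφ_pos _ (hW_one x)).ne'
            have := (hψ_pos _ (hW_one x)).ne'
            simp only [hg]
            field_simp
          have e3 : 0 ≤ f x ^ 2 * ψ (W x) :=
            mul_nonneg (sq_nonneg _) (hψ_pos _ (hW_one x)).le
          simp only
          -- Inside `A r` the left side vanishes and the right side is nonnegative; outside,
          -- `-L W ≥ φ(W)` and `ψ(W) ≥ I r`, with `G * I r = 1`.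
          by_cases hx : x ∈ A r
          · have e4 : f x ^ 2 / g (W x) * (b * (A r₀).indicator (fun _ => (1:ℝ)) x) ≤
                (b * M) * (f x ^ 2 * (A r₀).indicator (fun _ => (1:ℝ)) x) := by
              by_cases hx0 : x ∈ A r₀
              · have := mul_le_mul_of_nonneg_left (hM_le x hx0)
                  (mul_nonneg hb (sq_nonneg (f x)))
                simp only [hx0, indicator_of_mem, mul_one, div_eq_mul_inv]
                linarith
              · simp [hx0]
            have e5 : 0 ≤ f x ^ 2 / g (W x) * -gen p W x
                + (b * M) * (f x ^ 2 * (A r₀).indicator (fun _ => (1:ℝ)) x) := by linarith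
            have e6 := mul_nonneg hG0 e5
            simp only [hx, indicator_of_mem, mul_one, sub_self]
            linarith
          · have hx0 : x ∉ A r₀ := fun h => hx (hA_mono _ _ hr h)
            simp only [hx0, not_false_eq_true, indicator_of_notMem, mul_zero, sub_zero,
              e2, hx, add_zero] at e1 ⊢
            have e4 : f x ^ 2 * I r ≤ f x ^ 2 * ψ (W x) :=
              mul_le_mul_of_nonneg_left (hI_le r x hx) (sq_nonneg _)
            have e5 : G * I r = 1 := one_div_mul_cancel (one_pos.trans_le (hI1 r x hx)).ne'
            have e6 := mul_le_mul_of_nonneg_left (e4.trans e1) hG0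
            calc f x ^ 2 = G * (f x ^ 2 * I r) := by linear_combination -f x ^ 2 * e5
              _ ≤ _ := e6
      _ = G * ∫ x, f x ^ 2 / g (W x) * -gen p W x ∂μ
            + G * (b * M) * ∫ x in A r₀, f x ^ 2 ∂μ := by
          rw [integral_add (hint.const_mul G) ((hind_int r₀ hf hfc).const_mul _),
            integral_const_mul, integral_const_mul, hind_eq]
      _ ≤ G * D + G * (b * M) * ∫ x in A r₀, f x ^ 2 ∂μ := by
          have := mul_le_mul_of_nonneg_left hlyap_int hG0
          linarith
  have hArr : ∫ x in A r₀, f x ^ 2 ∂μ ≤ ∫ x in A r, f x ^ 2 ∂μ :=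
    setIntegral_mono_set (hsq_int' hf hfc).integrableOn (.of_forall fun x => sq_nonneg _)
      (hA_mono _ _ hr).eventuallyLE
  have hAr₀ : 0 ≤ ∫ x in A r₀, f x ^ 2 ∂μ := integral_nonneg fun x => sq_nonneg _
  have hgradD : ∫ x, ‖gradient f x‖ ^ 2 ∂μ ≤ D := by
    refine integral_mono (by simpa using hgrad_int hf hfc (continuous_const (y := (1:ℝ))))
      ?_ fun x => le_div_self (sq_nonneg _) (hD x).1 (hD x).2
    simpa only [div_eq_mul_inv, Pi.inv_apply] using
      hgrad_int hf hfc (ha_cont.inv₀ fun x => (hD x).1.ne')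
  have habs : (∫ x in A r, |f x| ∂μ) ^ 2 ≤ (∫ x, |f x| ∂μ) ^ 2 :=
    pow_le_pow_left₀ (integral_nonneg fun x => abs_nonneg _)
      (setIntegral_le_integral (hf.continuous.integrable_of_hasCompactSupport hfc).abs
        (.of_forall fun x => abs_nonneg _)) 2
  have hloc := hSPloc r hr_pos (s / c) (div_pos hs hc_pos) f hf hfc
  have hβc := hβ (s / c) (div_pos hs hc_pos)
  have h1 : c * ∫ x in A r, f x ^ 2 ∂μ
      ≤ s * D + c * βloc r (s / c) * (∫ x, |f x| ∂μ) ^ 2 := by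
    calc c * ∫ x in A r, f x ^ 2 ∂μ
        ≤ c * (s / c * D + βloc r (s / c) * (∫ x, |f x| ∂μ) ^ 2) := by
          refine mul_le_mul_of_nonneg_left (hloc.trans (add_le_add ?_ ?_)) hc_pos.le
          · exact mul_le_mul_of_nonneg_left hgradD (div_pos hs hc_pos).le
          · exact mul_le_mul_of_nonneg_left habs hβc
      _ = _ := by field_simp
  have h2 : G * (b * M) * ∫ x in A r₀, f x ^ 2 ∂μ ≤ (c - 1) * ∫ x in A r, f x ^ 2 ∂μ :=
    mul_le_mul (by rw [hc]; linarith) hArr hAr₀ (by linarith)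
  have h3 : G * D ≤ s * D := mul_le_mul_of_nonneg_right hGs hD0
  linarith
end

section
/- Let p be a smooth positive probability density on ℝ^n and μ = p(x)dx. Let ψ : (0,∞) → (0,∞) be a C¹ increasing function with ψ' > 0 everywhere, let h : ℝ^n → (0,∞) be a smooth function, and let f be a smooth compactly supported function on ℝ^n. Then ∫ (−(Δh + ∇(log p)·∇h)/ψ(h)) · f² dμ ≤ ∫ |∇f|²/ψ'(h) dμ. -/
/-!
The inequality holds separately in each coordinate direction `e`. The field
`V = p · (f² / ψ(h)) · ∂ₑh` is `C¹` with compact support, so `∫ ∂ₑV dx = 0`. By the chain rule,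
`∂ₑV = (p ∂ₑ∂ₑh + ∂ₑp ∂ₑh) f² / ψ(h) + p (2 f ∂ₑf ∂ₑh / ψ(h) - ψ'(h) f² (∂ₑh)² / ψ(h)²)`,
and completing the square (the pointwise form of Cauchy–Schwarz) bounds the last bracket by
`(∂ₑf)² / ψ'(h)`. Since `p ∂ₑ(log p) = ∂ₑp`, summing over an orthonormal basis gives the claim.
-/

open MeasureTheory Real Filter Set
open scoped RealInnerProductSpace

lemma integral_fderiv_apply_eq_zero {n : ℕ} {V : EuclideanSpace ℝ (Fin n) → ℝ}
    (hV : ContDiff ℝ 1 V) (hVs : HasCompactSupport V) (e : EuclideanSpace ℝ (Fin n)) :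
    ∫ x, fderiv ℝ V x e = 0 := by
  have hc : Continuous fun x => fderiv ℝ V x e :=
    (hV.continuous_fderiv one_ne_zero).clm_apply continuous_const
  have hi := hc.integrable_of_hasCompactSupport (μ := volume) (hVs.fderiv_apply (𝕜 := ℝ) e)
  have key := integral_mul_fderiv_eq_neg_fderiv_mul_of_integrable (μ := volume) (𝕜 := ℝ)
    (f := fun _ : EuclideanSpace ℝ (Fin n) => (1 : ℝ)) (g := V) (v := e)
    (by simp) (by simpa using hi)
    (by simpa using hV.continuous.integrable_of_hasCompactSupport hVs)
    (fun x _ => differentiableAt_const _) (fun x _ => hV.differentiable one_ne_zero x)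
  simpa using key

/-- The completed square behind the pointwise bound: with `s = ψ(h)`, `t = ψ'(h)`, `c = ∂ₑh`,
`d = ∂ₑf`, the difference of the two sides is `t (d / t - f c / s)²`. -/
lemma two_mul_sub_le_sq_div {s t : ℝ} (hs : 0 < s) (ht : 0 < t) (f c d : ℝ) :
    2 * f * d * c / s - t * f ^ 2 * c ^ 2 / s ^ 2 ≤ d ^ 2 / t := by
  have h1 : d ^ 2 / t - (2 * f * d * c / s - t * f ^ 2 * c ^ 2 / s ^ 2)
      = t * (d / t - f * c / s) ^ 2 := by
    field_simp
    ring
  have h2 : 0 ≤ t * (d / t - f * c / s) ^ 2 := by positivity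
  linarith

/-- The one-directional form of the inequality, against Lebesgue measure. Integrability of both
sides is included so that the directions can be summed. -/
lemma directional_lyapunov {n : ℕ} {p h f : EuclideanSpace ℝ (Fin n) → ℝ} {ψ : ℝ → ℝ}
    (hp : ContDiff ℝ (⊤ : ℕ∞) p) (hp_pos : ∀ x, 0 < p x)
    (hψ : ContDiffOn ℝ 1 ψ (Set.Ioi 0)) (hψ_pos : ∀ u > (0:ℝ), 0 < ψ u)
    (hψ' : ∀ u > (0:ℝ), 0 < deriv ψ u)
    (hh : ContDiff ℝ (⊤ : ℕ∞) h) (hh_pos : ∀ x, 0 < h x)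
    (hf : ContDiff ℝ (⊤ : ℕ∞) f) (hfs : HasCompactSupport f) (e : EuclideanSpace ℝ (Fin n)) :
    Integrable (fun x => -(p x * fderiv ℝ (fderiv ℝ h) x e e
        + fderiv ℝ p x e * fderiv ℝ h x e) / ψ (h x) * f x ^ 2) ∧
    Integrable (fun x => p x * (fderiv ℝ f x e ^ 2 / deriv ψ (h x))) ∧
    ∫ x, -(p x * fderiv ℝ (fderiv ℝ h) x e e
        + fderiv ℝ p x e * fderiv ℝ h x e) / ψ (h x) * f x ^ 2
      ≤ ∫ x, p x * (fderiv ℝ f x e ^ 2 / deriv ψ (h x)) := by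
  have hψh : ContDiff ℝ 1 fun x => ψ (h x) :=
    hψ.comp_contDiff (hh.of_le (by exact_mod_cast le_top)) hh_pos
  have hψ'h : Continuous fun x => deriv ψ (h x) :=
    (hψ.continuousOn_deriv_of_isOpen isOpen_Ioi le_rfl).comp_continuous hh.continuous hh_pos
  have hs : ∀ x, ψ (h x) ≠ 0 := fun x => (hψ_pos _ (hh_pos x)).ne'
  have ht : ∀ x, deriv ψ (h x) ≠ 0 := fun x => (hψ' _ (hh_pos x)).ne'
  have hdh : ContDiff ℝ 1 (fderiv ℝ h) := (contDiff_infty.mp hh 2 : ContDiff ℝ 2 h).fderiv_right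
    (by norm_num)
  have hdhe : ContDiff ℝ 1 fun x => fderiv ℝ h x e := hdh.clm_apply contDiff_const
  have hddh : Continuous fun x => fderiv ℝ (fderiv ℝ h) x e e :=
    ((hdh.continuous_fderiv one_ne_zero).clm_apply continuous_const).clm_apply continuous_const
  have hdp : Continuous fun x => fderiv ℝ p x e :=
    (hp.continuous_fderiv (by simp)).clm_apply continuous_const
  have hdf : Continuous fun x => fderiv ℝ f x e :=
    (hf.continuous_fderiv (by simp)).clm_apply continuous_const
  have hp1 : ContDiff ℝ 1 p := hp.of_le (by exact_mod_cast le_top)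
  have hf1 : ContDiff ℝ 1 f := hf.of_le (by exact_mod_cast le_top)
  have hV : ContDiff ℝ 1 fun x => p x * fderiv ℝ h x e / ψ (h x) * f x ^ 2 :=
    ((hp1.mul hdhe).div hψh hs).mul (hf1.pow 2)
  have hf2s : HasCompactSupport fun x => f x ^ 2 :=
    hfs.comp_left (g := fun y : ℝ => y ^ 2) (by simp)
  have hVs : HasCompactSupport fun x => p x * fderiv ℝ h x e / ψ (h x) * f x ^ 2 :=
    hf2s.mul_left
  have hIA : Integrable (fun x => -(p x * fderiv ℝ (fderiv ℝ h) x e e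
        + fderiv ℝ p x e * fderiv ℝ h x e) / ψ (h x) * f x ^ 2) := by
    refine Continuous.integrable_of_hasCompactSupport ?_ hf2s.mul_left
    exact ((((hp.continuous.mul hddh).add (hdp.mul hdhe.continuous)).neg).div
      hψh.continuous hs).mul (hf.continuous.pow 2)
  have hIB : Integrable (fun x => p x * (fderiv ℝ f x e ^ 2 / deriv ψ (h x))) := by
    refine Continuous.integrable_of_hasCompactSupport
      (hp.continuous.mul ((hdf.pow 2).div hψ'h ht)) ?_
    refine (hfs.fderiv_apply (𝕜 := ℝ) e).mono fun x hx => ?_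
    contrapose! hx
    simp only [Function.mem_support, not_not] at hx ⊢
    simp [hx]
  have hIV : Integrable
      fun x => fderiv ℝ (fun x => p x * fderiv ℝ h x e / ψ (h x) * f x ^ 2) x e :=
    Continuous.integrable_of_hasCompactSupport
      ((hV.continuous_fderiv one_ne_zero).clm_apply continuous_const)
      (hVs.fderiv_apply (𝕜 := ℝ) e)
  refine ⟨hIA, hIB, ?_⟩
  have hpt : ∀ x, -(p x * fderiv ℝ (fderiv ℝ h) x e e
        + fderiv ℝ p x e * fderiv ℝ h x e) / ψ (h x) * f x ^ 2
      + fderiv ℝ (fun x => p x * fderiv ℝ h x e / ψ (h x) * f x ^ 2) x e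
      ≤ p x * (fderiv ℝ f x e ^ 2 / deriv ψ (h x)) := by
    intro x
    have Dp := (hp1.differentiable one_ne_zero x).hasFDerivAt
    have Df := (hf1.differentiable one_ne_zero x).hasFDerivAt
    have Dh := (hh.differentiable (by simp) x).hasFDerivAt
    have Ddh := (hdh.differentiable one_ne_zero x).hasFDerivAt
    have Dψ : HasDerivAt ψ (deriv ψ (h x)) (h x) :=
      ((hψ.contDiffAt (Ioi_mem_nhds (hh_pos x))).differentiableAt one_ne_zero).hasDerivAt
    -- Restricting to the line `x + r e` reduces the product and chain rules to one variable.
    have L : HasDerivAt (fun r : ℝ => x + r • e) e 0 := by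
      simpa using ((hasDerivAt_id (0 : ℝ)).smul_const e).const_add x
    have line : ∀ {F : Type} [NormedAddCommGroup F] [NormedSpace ℝ F]
        {g : EuclideanSpace ℝ (Fin n) → F} {g' : EuclideanSpace ℝ (Fin n) →L[ℝ] F},
        HasFDerivAt g g' x → HasDerivAt (fun r : ℝ => g (x + r • e)) (g' e) 0 := by
      intro F _ _ g g' hg
      refine HasFDerivAt.comp_hasDerivAt (0 : ℝ) ?_ L
      simpa using hg
    have Ddhe : HasDerivAt (fun r : ℝ => fderiv ℝ h (x + r • e) e)
        (fderiv ℝ (fderiv ℝ h) x e e) 0 := by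
      simpa using (line Ddh).clm_apply (hasDerivAt_const (0 : ℝ) e)
    have Dψh : HasDerivAt (fun r : ℝ => ψ (h (x + r • e)))
        (deriv ψ (h x) * fderiv ℝ h x e) 0 := by
      refine HasDerivAt.comp (0 : ℝ) ?_ (line Dh)
      simpa using Dψ
    have DV := ((((line Dp).mul Ddhe).div Dψh (by simpa using hs x)).mul ((line Df).pow 2)).unique
      (line (hV.differentiable one_ne_zero x).hasFDerivAt)
    simp only [zero_smul, add_zero, Pi.mul_apply, Pi.div_apply, Pi.pow_apply] at DV
    rw [← DV]
    have hsq := mul_le_mul_of_nonneg_left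
      (two_mul_sub_le_sq_div (hψ_pos _ (hh_pos x)) (hψ' _ (hh_pos x))
        (f x) (fderiv ℝ h x e) (fderiv ℝ f x e)) (hp_pos x).le
    refine le_trans (le_of_eq ?_) hsq
    have := hs x
    field_simp
    push_cast
    ring
  calc _ = ∫ x, (-(p x * fderiv ℝ (fderiv ℝ h) x e e
        + fderiv ℝ p x e * fderiv ℝ h x e) / ψ (h x) * f x ^ 2
      + fderiv ℝ (fun x => p x * fderiv ℝ h x e / ψ (h x) * f x ^ 2) x e) := by
        rw [integral_add hIA hIV, integral_fderiv_apply_eq_zero hV hVs e, add_zero]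
    _ ≤ _ := integral_mono (hIA.add hIV) hIB hpt

lemma gradient_apply_eq_fderiv {n : ℕ} (g : EuclideanSpace ℝ (Fin n) → ℝ)
    (x : EuclideanSpace ℝ (Fin n)) (i : Fin n) :
    gradient g x i = fderiv ℝ g x (EuclideanSpace.single i 1) := by
  rw [← inner_gradient_left, EuclideanSpace.inner_single_right]
  simp

/-- **Lemma 2.2** (Cattiaux–Gozlan–Guillin–Roberto): for a probability measure
`μ = p dx` with smooth positive density, a `C¹` increasing `ψ` with `ψ' > 0`,
a smooth positive `h` and a smooth compactly supported `f`,
`∫ (−Lh/ψ(h)) f² dμ ≤ ∫ |∇f|²/ψ'(h) dμ`, where `Lh = Δh + ∇(log p)·∇h`. -/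
theorem weighted_lyapunov_lemma {n : ℕ}
    (p : EuclideanSpace ℝ (Fin n) → ℝ)
    (hp_smooth : ContDiff ℝ (⊤ : ℕ∞) p) (hp_pos : ∀ x, 0 < p x)
    (μ : Measure (EuclideanSpace ℝ (Fin n)))
    (hμ : μ = volume.withDensity (fun x => ENNReal.ofReal (p x)))
    (hμ_prob : IsProbabilityMeasure μ)
    (ψ : ℝ → ℝ) (hψ_diff : ContDiffOn ℝ 1 ψ (Set.Ioi 0))
    (hψ_pos : ∀ u > (0:ℝ), 0 < ψ u)
    (hψ_deriv_pos : ∀ u > (0:ℝ), 0 < deriv ψ u)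
    (hψ_mono : StrictMonoOn ψ (Set.Ioi 0))
    (h : EuclideanSpace ℝ (Fin n) → ℝ)
    (hh_smooth : ContDiff ℝ (⊤ : ℕ∞) h) (hh_pos : ∀ x, 0 < h x)
    (f : EuclideanSpace ℝ (Fin n) → ℝ)
    (hf_smooth : ContDiff ℝ (⊤ : ℕ∞) f) (hf_supp : HasCompactSupport f) :
    ∫ x, (-(lap h x + ⟪gradient (fun y => Real.log (p y)) x, gradient h x⟫) / ψ (h x))
        * (f x) ^ 2 ∂μ
      ≤ ∫ x, ‖gradient f x‖ ^ 2 / deriv ψ (h x) ∂μ := by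
  have key := fun i : Fin n => directional_lyapunov hp_smooth hp_pos hψ_diff hψ_pos hψ_deriv_pos
    hh_smooth hh_pos hf_smooth hf_supp (EuclideanSpace.single i 1)
  have hmeas : Measurable fun x => ENNReal.ofReal (p x) :=
    hp_smooth.continuous.measurable.ennreal_ofReal
  rw [hμ, integral_withDensity_eq_integral_toReal_smul hmeas (by simp),
    integral_withDensity_eq_integral_toReal_smul hmeas (by simp)]
  simp only [ENNReal.toReal_ofReal (hp_pos _).le, smul_eq_mul]
  have hlog : ∀ x (e : EuclideanSpace ℝ (Fin n)),
      fderiv ℝ (fun y => Real.log (p y)) x e = fderiv ℝ p x e / p x := by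
    intro x e
    rw [fderiv.log (hp_smooth.differentiable (by simp) x) (hp_pos x).ne']
    simp [div_eq_inv_mul]
  have hL : ∀ x, p x * (-(lap h x + ⟪gradient (fun y => Real.log (p y)) x, gradient h x⟫)
        / ψ (h x) * f x ^ 2)
      = ∑ i : Fin n, -(p x * fderiv ℝ (fderiv ℝ h) x (EuclideanSpace.single i 1)
          (EuclideanSpace.single i 1) + fderiv ℝ p x (EuclideanSpace.single i 1)
          * fderiv ℝ h x (EuclideanSpace.single i 1)) / ψ (h x) * f x ^ 2 := by
    intro x
    have hx := (hp_pos x).ne'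
    rw [lap, PiLp.inner_apply, ← Finset.sum_add_distrib, ← Finset.sum_neg_distrib,
      Finset.sum_div, Finset.sum_mul, Finset.mul_sum]
    refine Finset.sum_congr rfl fun i _ => ?_
    rw [iteratedFDeriv_two_apply, gradient_apply_eq_fderiv, gradient_apply_eq_fderiv, hlog]
    simp only [RCLike.inner_apply, conj_trivial, Matrix.cons_val_zero, Matrix.cons_val_one]
    field_simp
  have hR : ∀ x, p x * (‖gradient f x‖ ^ 2 / deriv ψ (h x))
      = ∑ i : Fin n, p x * (fderiv ℝ f x (EuclideanSpace.single i 1) ^ 2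
          / deriv ψ (h x)) := by
    intro x
    rw [EuclideanSpace.real_norm_sq_eq, Finset.sum_div, Finset.mul_sum]
    simp only [gradient_apply_eq_fderiv]
  simp only [hL, hR]
  rw [integral_finsetSum _ fun i _ => (key i).1, integral_finsetSum _ fun i _ => (key i).2.1]
  exact Finset.sum_le_sum fun i _ => (key i).2.2
end

section
/- Let μ be a probability measure on ℝ^n, ω : ℝ^n → [1,∞) a measurable weight, and F : (0,∞) → [0,∞) a continuous non-decreasing function with F(r) → ∞ as r → ∞. Suppose μ satisfies the defective weighted F-Sobolev inequality: there are constants C₁, C₂ > 0 such that ∫ f² F(f²) dμ ≤ C₁ ∫ |∇f|² ω dμ + C₂ for every bounded C¹ function f with bounded gradient satisfying ∫ f² dμ = 1. Then there exist constants c₁, c₂ > 0 such that for every bounded C¹ function f with bounded gradient and every s > 0, ∫ f² dμ ≤ s ∫ |∇f|² ω dμ + c₁ F^{-1}(c₂(1 + 1/s)) (∫ |f| dμ)², where F^{-1}(t) := inf{r ≥ 0 : F(r) ≥ t}. -/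
/-!
Normalise `∫ f² = 1`, fix a level `K = c₂ (1 + 1/s)` and let `r = F⁻¹(K)`. Where `f² ≤ r` one has
`f² ≤ √r |f|`, and where `f² > r` monotonicity gives `F(f²) ≥ K`, so `f² ≤ f² F(f²) / K`.
Integrating the resulting pointwise bound and inserting the `F`-Sobolev inequality yields
`1 ≤ √r ∫ |f| + (C₁ E + C₂) / K`, with `E` the weighted energy. With
`√r ∫ |f| ≤ 1/4 + r (∫ |f|)²` and `c₂` so large that `C₂ / K ≤ 1/4` and `2 C₁ / K ≤ s`, the
constants are absorbed, and `c₁ = 2` works. The general case follows because both sides are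
homogeneous of degree two; since the Bochner integral commutes with scalar multiplication
unconditionally, the energy scales correctly even if it is not integrable (its value is then `0`).

The statement places no constraint on `F 0`, which could put `0` into the set defining `F⁻¹(K)`;
choosing `c₂ > |F 0|` excludes this.
-/

open MeasureTheory Real Filter Set

/-- `F ≥ K` strictly above `F⁻¹(K)`; the hypothesis `F 0 < K` keeps the point `0`, where
monotonicity is not assumed, out of the superlevel set. -/
lemma le_of_sInf_lt {F : ℝ → ℝ} (hF_mono : MonotoneOn F (Set.Ioi 0))
    (hF_tendsto : Tendsto F atTop atTop) {K t : ℝ} (h0 : F 0 < K)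
    (ht : sInf {r : ℝ | 0 ≤ r ∧ K ≤ F r} < t) : K ≤ F t := by
  have hne : {r : ℝ | 0 ≤ r ∧ K ≤ F r}.Nonempty :=
    ((eventually_ge_atTop 0).and (hF_tendsto.eventually_ge_atTop K)).exists
  obtain ⟨r, ⟨hr0, hrK⟩, hrt⟩ := exists_lt_of_csInf_lt hne ht
  have hr : 0 < r := by
    rcases hr0.eq_or_lt with h | h
    · subst h
      linarith
    · exact h
  exact hrK.trans (hF_mono hr (hr.trans hrt) hrt.le)

/-- The pointwise splitting at the level `F⁻¹(K)`. -/
lemma sq_le_split {F : ℝ → ℝ} (hF_mono : MonotoneOn F (Set.Ioi 0))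
    (hF_nonneg : ∀ r > (0:ℝ), 0 ≤ F r)
    (hF_tendsto : Tendsto F atTop atTop) {K : ℝ} (hK : 0 < K) (h0 : F 0 < K) (a : ℝ) :
    a ^ 2 ≤ √(sInf {r : ℝ | 0 ≤ r ∧ K ≤ F r}) * |a| + (a ^ 2 * F (a ^ 2)) / K := by
  set r₀ := sInf {r : ℝ | 0 ≤ r ∧ K ≤ F r}
  rcases le_or_gt (a ^ 2) r₀ with h | h
  · have h1 : |a| ≤ √r₀ := Real.abs_le_sqrt h
    have h2 : 0 ≤ a ^ 2 * F (a ^ 2) := by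
      rcases (sq_nonneg a).eq_or_lt with h | h
      · simp [← h]
      · exact mul_nonneg h.le (hF_nonneg _ h)
    have h3 : a ^ 2 ≤ √r₀ * |a| := by
      rw [← sq_abs, sq]
      exact mul_le_mul_of_nonneg_right h1 (abs_nonneg a)
    have := div_nonneg h2 hK.le
    linarith
  · have h1 : K ≤ F (a ^ 2) := le_of_sInf_lt hF_mono hF_tendsto h0 h
    have h2 : a ^ 2 ≤ (a ^ 2 * F (a ^ 2)) / K := by
      rw [le_div_iff₀ hK]
      exact mul_le_mul_of_nonneg_left h1 (sq_nonneg a)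
    have := mul_nonneg (Real.sqrt_nonneg r₀) (abs_nonneg a)
    linarith

lemma integrable_sq_mul {α : Type*} [MeasurableSpace α] (μ : Measure α) [IsFiniteMeasure μ]
    {F : ℝ → ℝ} (hF_cont : ContinuousOn F (Set.Ioi 0)) (hF_mono : MonotoneOn F (Set.Ioi 0))
    (hF_nonneg : ∀ r > (0:ℝ), 0 ≤ F r) {g : α → ℝ} (hg : Measurable g) {C : ℝ}
    (hC : ∀ x, |g x| ≤ C) : Integrable (fun x => (g x) ^ 2 * F ((g x) ^ 2)) μ := by
  classical
  -- The factor `g²` kills the value of `F` at `0`, where `F` is not controlled.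
  have hG : Measurable (Set.piecewise (Set.Ioi (0:ℝ)) F 0) :=
    hF_cont.measurable_piecewise continuousOn_const measurableSet_Ioi
  have heq : (fun x => (g x) ^ 2 * F ((g x) ^ 2))
      = fun x => (g x) ^ 2 * Set.piecewise (Set.Ioi (0:ℝ)) F 0 ((g x) ^ 2) := by
    funext x
    rcases (sq_nonneg (g x)).eq_or_lt with h | h
    · simp [← h]
    · rw [Set.piecewise_eq_of_mem _ _ _ (Set.mem_Ioi.2 h)]
  have hmeas : Measurable (fun x => (g x) ^ 2 * F ((g x) ^ 2)) := by
    rw [heq]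
    exact (hg.pow_const 2).mul (hG.comp (hg.pow_const 2))
  refine Integrable.of_bound hmeas.aestronglyMeasurable (C ^ 2 * F (C ^ 2))
    (Eventually.of_forall fun x => ?_)
  have hle : (g x) ^ 2 ≤ C ^ 2 := sq_le_sq' (abs_le.1 (hC x)).1 (abs_le.1 (hC x)).2
  rcases (sq_nonneg (g x)).eq_or_lt with h | h
  · rw [← h, zero_mul, norm_zero]
    rcases (sq_nonneg C).eq_or_lt with h' | h'
    · simp [← h']
    · exact mul_nonneg h'.le (hF_nonneg _ h')
  · have hC2 : 0 < C ^ 2 := h.trans_le hle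
    rw [Real.norm_of_nonneg (mul_nonneg h.le (hF_nonneg _ h))]
    exact mul_le_mul hle (hF_mono h hC2 hle) (hF_nonneg _ h) hC2.le

/-- The estimate for normalised functions, with `B` the value of the right-hand side of the
`F`-Sobolev inequality. -/
lemma one_le_of_split {α : Type*} [MeasurableSpace α] (μ : Measure α) [IsFiniteMeasure μ]
    {F : ℝ → ℝ} (hF_cont : ContinuousOn F (Set.Ioi 0)) (hF_mono : MonotoneOn F (Set.Ioi 0))
    (hF_nonneg : ∀ r > (0:ℝ), 0 ≤ F r) (hF_tendsto : Tendsto F atTop atTop)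
    {K : ℝ} (hK : 0 < K) (h0 : F 0 < K)
    {g : α → ℝ} (hg : Measurable g) {C : ℝ} (hC : ∀ x, |g x| ≤ C)
    (hnorm : ∫ x, (g x) ^ 2 ∂μ = 1) {B : ℝ}
    (hB : ∫ x, (g x) ^ 2 * F ((g x) ^ 2) ∂μ ≤ B) :
    1 ≤ √(sInf {r : ℝ | 0 ≤ r ∧ K ≤ F r}) * ∫ x, |g x| ∂μ + B / K := by
  have hi := integrable_sq_mul μ hF_cont hF_mono hF_nonneg hg hC
  have hgi : Integrable g μ := Integrable.of_bound hg.aestronglyMeasurable C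
    (Eventually.of_forall hC)
  have hi1 := hgi.abs.const_mul (√(sInf {r : ℝ | 0 ≤ r ∧ K ≤ F r}))
  have hg2 : Integrable (fun x => (g x) ^ 2) μ := by
    by_contra h
    rw [integral_undef h] at hnorm
    norm_num at hnorm
  have h := integral_mono hg2 (hi1.add (hi.div_const K))
    (fun x => sq_le_split hF_mono hF_nonneg hF_tendsto hK h0 (g x))
  have h2 := integral_add hi1 (hi.div_const K)
  simp only [Pi.add_apply] at h
  rw [hnorm, h2, integral_const_mul, integral_div] at h
  have := div_le_div_of_nonneg_right hB hK.le
  linarith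

lemma gradient_const_mul_eq {n : ℕ} {f : EuclideanSpace ℝ (Fin n) → ℝ} (hf : Differentiable ℝ f)
    (c : ℝ) (x : EuclideanSpace ℝ (Fin n)) :
    gradient (fun y => c * f y) x = c • gradient f x := by
  simp only [gradient]
  rw [fderiv_const_mul (hf x), map_smulₛₗ]
  simp


/-- **Proposition 2.3 (1)**: a defective weighted `F`-Sobolev inequality implies a super
weighted Poincaré inequality with rate `β(s) = c₁ F⁻¹(c₂(1 + 1/s))`, where
`F⁻¹(t) = inf{r ≥ 0 : F(r) ≥ t}`. -/
theorem super_weighted_poincare_of_F_sobolev {n : ℕ}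
    (μ : Measure (EuclideanSpace ℝ (Fin n))) [IsProbabilityMeasure μ]
    (ω : EuclideanSpace ℝ (Fin n) → ℝ) (hω_meas : Measurable ω) (hω_one : ∀ x, 1 ≤ ω x)
    (F : ℝ → ℝ)
    (hF_cont : ContinuousOn F (Set.Ioi 0))
    (hF_mono : MonotoneOn F (Set.Ioi 0))
    (hF_nonneg : ∀ r > (0:ℝ), 0 ≤ F r)
    (hF_tendsto : Tendsto F atTop atTop)
    (C₁ C₂ : ℝ) (hC₁ : 0 < C₁) (hC₂ : 0 < C₂)
    (hFS : ∀ f : EuclideanSpace ℝ (Fin n) → ℝ,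
        ContDiff ℝ 1 f → (∃ C, ∀ x, |f x| ≤ C) → (∃ C, ∀ x, ‖gradient f x‖ ≤ C) →
        ∫ x, (f x) ^ 2 ∂μ = 1 →
        ∫ x, (f x) ^ 2 * F ((f x) ^ 2) ∂μ
          ≤ C₁ * ∫ x, ‖gradient f x‖ ^ 2 * ω x ∂μ + C₂) :
    ∃ c₁ > (0:ℝ), ∃ c₂ > (0:ℝ),
      ∀ f : EuclideanSpace ℝ (Fin n) → ℝ,
        ContDiff ℝ 1 f → (∃ C, ∀ x, |f x| ≤ C) → (∃ C, ∀ x, ‖gradient f x‖ ≤ C) →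
        ∀ s > (0:ℝ),
        ∫ x, (f x) ^ 2 ∂μ
          ≤ s * ∫ x, ‖gradient f x‖ ^ 2 * ω x ∂μ
            + c₁ * sInf {r : ℝ | 0 ≤ r ∧ c₂ * (1 + 1 / s) ≤ F r} * (∫ x, |f x| ∂μ) ^ 2 := by
  set c₂ : ℝ := 4 * C₂ + 2 * C₁ + |F 0| + 1 with hc₂
  have hF0 := abs_nonneg (F 0)
  have hc₂pos : 0 < c₂ := by positivity
  refine ⟨2, two_pos, c₂, hc₂pos, ?_⟩
  rintro f hf ⟨C, hC⟩ ⟨D, hD⟩ s hs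
  set K := c₂ * (1 + 1 / s) with hKdef
  have hKc : K = c₂ + c₂ / s := by rw [hKdef]; ring
  have hdiv : 0 < c₂ / s := div_pos hc₂pos hs
  have hKpos : 0 < K := by linarith
  have h0 : F 0 < K := by linarith [le_abs_self (F 0)]
  set r₀ := sInf {r : ℝ | 0 ≤ r ∧ K ≤ F r} with hr₀
  have hr₀nn : 0 ≤ r₀ := Real.sInf_nonneg fun r hr => hr.1
  set E := ∫ x, ‖gradient f x‖ ^ 2 * ω x ∂μ with hE
  have hEnn : 0 ≤ E := integral_nonneg fun x =>
    mul_nonneg (sq_nonneg _) (zero_le_one.trans (hω_one x))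
  set A := ∫ x, |f x| ∂μ with hA
  set M := ∫ x, (f x) ^ 2 ∂μ with hM
  have hMnn : 0 ≤ M := integral_nonneg fun x => sq_nonneg _
  rcases hMnn.eq_or_lt with hM0 | hMpos
  · rw [← hM0]
    positivity
  set c : ℝ := (√M)⁻¹ with hc
  have hcpos : 0 < c := inv_pos.2 (Real.sqrt_pos.2 hMpos)
  have hc2 : c ^ 2 * M = 1 := by
    rw [hc, inv_pow, Real.sq_sqrt hMnn, inv_mul_cancel₀ hMpos.ne']
  have hgrad : ∀ x, gradient (fun y => c * f y) x = c • gradient f x :=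
    gradient_const_mul_eq (hf.differentiable one_ne_zero) c
  have hg : ContDiff ℝ 1 (fun y => c * f y) := contDiff_const.mul hf
  have hgC : ∀ x, |c * f x| ≤ c * C := fun x => by
    rw [abs_mul, abs_of_pos hcpos]
    exact mul_le_mul_of_nonneg_left (hC x) hcpos.le
  have hnorm : ∫ x, (c * f x) ^ 2 ∂μ = 1 := by
    simp only [mul_pow]
    rw [integral_const_mul, hc2]
  have hgE : ∫ x, ‖gradient (fun y => c * f y) x‖ ^ 2 * ω x ∂μ = c ^ 2 * E := by
    rw [hE, ← integral_const_mul]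
    refine integral_congr_ae (Eventually.of_forall fun x => ?_)
    simp only [hgrad, norm_smul, Real.norm_of_nonneg hcpos.le]
    ring
  have hgA : ∫ x, |c * f x| ∂μ = c * A := by
    simp only [abs_mul, abs_of_pos hcpos]
    rw [integral_const_mul]
  have hB := hFS _ hg ⟨_, hgC⟩ ⟨c * D, fun x => by
    rw [hgrad, norm_smul, Real.norm_of_nonneg hcpos.le]
    exact mul_le_mul_of_nonneg_left (hD x) hcpos.le⟩ hnorm
  have hmain := one_le_of_split μ hF_cont hF_mono hF_nonneg hF_tendsto hKpos h0
    hg.continuous.measurable hgC hnorm hB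
  rw [hgE, hgA, ← hr₀, add_div] at hmain
  have hamgm : √r₀ * (c * A) ≤ 1 / 4 + r₀ * (c * A) ^ 2 := by
    have h1 := sq_nonneg (√r₀ * (c * A) - 1 / 2)
    have h2 := Real.sq_sqrt hr₀nn
    nlinarith
  have hC₂K : C₂ / K ≤ 1 / 4 := by
    rw [div_le_iff₀ hKpos]
    linarith
  have hC₁K : C₁ * (c ^ 2 * E) / K ≤ s / 2 * (c ^ 2 * E) := by
    rw [div_le_iff₀ hKpos]
    have h1 : C₁ ≤ s / 2 * K := by
      have : s * K = c₂ * s + c₂ := by rw [hKc]; field_simp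
      nlinarith [mul_pos hc₂pos hs]
    have h2 : 0 ≤ c ^ 2 * E := by positivity
    nlinarith
  have hfin : 1 ≤ c ^ 2 * (s * E + 2 * r₀ * A ^ 2) := by
    have : c ^ 2 * (s * E + 2 * r₀ * A ^ 2)
        = 2 * (s / 2 * (c ^ 2 * E)) + 2 * (r₀ * (c * A) ^ 2) := by ring
    linarith
  have hc2pos : 0 < c ^ 2 := by positivity
  exact le_of_mul_le_mul_left (hc2.le.trans hfin) hc2pos
end

section
/- Let μ be a probability measure on ℝ^n, ω : ℝ^n → [1,∞) a measurable weight, and β_ω : (0,∞) → (0,∞) a non-increasing function. Suppose μ satisfies the super weighted Poincaré inequality: for all s > 0 and all bounded C¹ functions f with bounded gradient, ∫ f² dμ ≤ s ∫ |∇f|² ω dμ + β_ω(s)(∫ |f| dμ)². Define ξ(t) := sup_{r>0} (1/r − β_ω(r)/(r t)) for t > 0 (a non-negative, possibly zero, quantity). Then for every ε ∈ (0,1) there exist constants c₁(ε), c₂(ε) > 0 such that for every bounded C¹ function f with bounded gradient satisfying ∫ f² dμ = 1, one has ∫ f² F_ε(f²) dμ ≤ c₁(ε) ∫ |∇f|²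 ω dμ + c₂(ε), where F_ε(r) := (1/r)∫₀^r ξ(ε t) dt. -/
/-!
The proof integrates one capacity-type estimate over all levels `t > 0`. Fix a smooth `φ` rising from
`0` on `(-∞, ε]` to `1` on `[1, ∞)`, with `|φ'| ≤ M`, and test the super Poincaré inequality on
`g = φ(f²/t)`. Since `∫ f² dμ = 1` and `g` lives on `{f² > εt}`, Cauchy–Schwarz and Markov give
`(∫ |g| dμ)² ≤ ∫ g² dμ / (εt)`; taking the supremum over the parameter `s` yields (`level_bound`)
`ξ(εt) μ(f² ≥ t) ≤ ξ(εt) ∫ g² dμ ≤ (4M²/t) ∫_{εt ≤ f² ≤ t} |∇f|² ω dμ`.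
By Tonelli the integral over `t` of the left side is `∫ f² F_ε(f²) dμ`, and that of the right side is
`4M² log(1/ε) ∫ |∇f|² ω dμ`, because `∫ dt/t` over `[f², f²/ε]` is `log(1/ε)`
(`sobolev_of_finite_energy`).

Where the supremum defining `ξ` is infinite the formal `ξ` is `0`, which only lowers the left side.
A test function of infinite energy has formal energy `0`, both in the hypothesis and in the
conclusion. If one exists, then perturbing by small multiples of it shows that every test function satisfies the super
Poincaré inequality with weight `0` (`poincare_of_infinite_energy`), and the same argument with
weight `0` bounds the left side by `0`.
-/

open MeasureTheory Real Filter Set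

/-! ### The rate function and test functions -/

/-- The rate function `ξ(t) = sup_{r>0} (1/r - β(r)/(r t))`, with the convention that it is `0`
where the supremum is infinite. -/
noncomputable def superRate (β : ℝ → ℝ) (t : ℝ) : ℝ :=
  ⨆ r : {r : ℝ // 0 < r}, (1 / (r : ℝ) - β r / (r * t))

/-- `f` is a bounded `C¹` function with bounded gradient. -/
def IsTestFun {n : ℕ} (f : EuclideanSpace ℝ (Fin n) → ℝ) : Prop :=
  ContDiff ℝ 1 f ∧ (∃ C, ∀ x, |f x| ≤ C) ∧ (∃ C, ∀ x, ‖gradient f x‖ ≤ C)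

/-- The true supremum is nondecreasing in `t`, so the set where it is finite is an interval and
`ξ` is monotone there. -/
lemma aemeasurable_superRate (β : ℝ → ℝ) (hβ : ∀ s > (0 : ℝ), 0 < β s) {ε : ℝ} (hε : 0 < ε) :
    AEMeasurable (fun t => superRate β (ε * t)) (volume.restrict (Ioi 0)) := by
  have hmono : ∀ r : {r : ℝ // 0 < r}, ∀ a b : ℝ, 0 < a → a ≤ b →
      1 / (r : ℝ) - β r / (r * (ε * a)) ≤ 1 / (r : ℝ) - β r / (r * (ε * b)) := by
    intro r a b ha hab
    have h1 := hβ r r.2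
    have h2 := r.2
    gcongr
  set S : Set ℝ := {t | 0 < t ∧
    BddAbove (range fun r : {r : ℝ // 0 < r} => 1 / (r : ℝ) - β r / (r * (ε * t)))} with hS
  have hSm : MeasurableSet S := by
    refine OrdConnected.measurableSet ⟨fun x hx y hy z hz => ⟨hx.1.trans_le hz.1, ?_⟩⟩
    obtain ⟨C, hC⟩ := hy.2
    refine ⟨C, ?_⟩
    rintro _ ⟨r, rfl⟩
    exact (hmono r z y (hx.1.trans_le hz.1) hz.2).trans (hC ⟨r, rfl⟩)
  have hm : MonotoneOn (fun t => superRate β (ε * t)) S := by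
    intro a ha b hb hab
    exact ciSup_mono hb.2 fun r => hmono r a b ha.1 hab
  have h1 : AEMeasurable (S.indicator fun t => superRate β (ε * t)) volume :=
    (aemeasurable_indicator_iff hSm).2 (aemeasurable_restrict_of_monotoneOn hSm hm)
  refine h1.restrict.congr ?_
  filter_upwards [ae_restrict_mem measurableSet_Ioi] with t ht
  by_cases h : t ∈ S
  · simp [h]
  · simp only [h, not_false_eq_true, indicator_of_notMem]
    exact (Real.iSup_of_not_bddAbove fun hb => h ⟨ht, hb⟩).symm

/-! ### Cutoffs of test functions -/

lemma exists_cutoff_s4 {ε : ℝ} (hε : ε < 1) :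
    ∃ φ : ℝ → ℝ, ContDiff ℝ 1 φ ∧ (∀ v, 0 ≤ φ v) ∧ (∀ v, φ v ≤ 1) ∧ (∀ v ≤ ε, φ v = 0) ∧
      (∀ v, 1 ≤ v → φ v = 1) ∧ (∀ v, v ∉ Icc ε 1 → deriv φ v = 0) ∧
      ∃ M, ∀ v, |deriv φ v| ≤ M := by
  have h1 : 0 < 1 - ε := by linarith
  set φ : ℝ → ℝ := fun v => Real.smoothTransition ((v - ε) / (1 - ε)) with hφ
  have hc : ContDiff ℝ 1 φ := Real.smoothTransition.contDiff.comp (by fun_prop)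
  have h0 : ∀ v ≤ ε, φ v = 0 := fun v hv =>
    Real.smoothTransition.zero_of_nonpos (div_nonpos_of_nonpos_of_nonneg (by linarith) h1.le)
  have h2 : ∀ v, 1 ≤ v → φ v = 1 := fun v hv =>
    Real.smoothTransition.one_of_one_le ((one_le_div h1).2 (by linarith))
  have h3 : ∀ v, v ∉ Icc ε 1 → deriv φ v = 0 := by
    intro v hv
    rw [mem_Icc, not_and_or, not_le, not_le] at hv
    rcases hv with hv | hv
    · have : φ =ᶠ[nhds v] fun _ => 0 := by
        filter_upwards [Iio_mem_nhds hv] with y hy using h0 y (le_of_lt hy)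
      rw [this.deriv_eq]; simp
    · have : φ =ᶠ[nhds v] fun _ => 1 := by
        filter_upwards [Ioi_mem_nhds hv] with y hy using h2 y (le_of_lt hy)
      rw [this.deriv_eq]; simp
  refine ⟨φ, hc, fun v => Real.smoothTransition.nonneg _, fun v => Real.smoothTransition.le_one _,
    h0, h2, h3, ?_⟩
  obtain ⟨M, hM⟩ := (isCompact_Icc (a := ε) (b := 1)).exists_bound_of_continuousOn
    (hc.continuous_deriv le_rfl).continuousOn
  refine ⟨max M 0, fun v => ?_⟩
  by_cases hv : v ∈ Icc ε 1
  · exact (hM v hv).trans (le_max_left _ _)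
  · simp [h3 v hv]

lemma norm_gradient_eq {n : ℕ} (f : EuclideanSpace ℝ (Fin n) → ℝ) (x) :
    ‖gradient f x‖ = ‖fderiv ℝ f x‖ := by
  simp [gradient]

lemma IsTestFun.integrable {n : ℕ} {μ : Measure (EuclideanSpace ℝ (Fin n))} [IsProbabilityMeasure μ]
    {f : EuclideanSpace ℝ (Fin n) → ℝ} (hf : IsTestFun f) : Integrable f μ := by
  obtain ⟨h, ⟨C, hC⟩, -⟩ := hf
  exact Integrable.of_bound h.continuous.aestronglyMeasurable C (Eventually.of_forall hC)

lemma IsTestFun.integrable_sq {n : ℕ} {μ : Measure (EuclideanSpace ℝ (Fin n))}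
    [IsProbabilityMeasure μ]
    {f : EuclideanSpace ℝ (Fin n) → ℝ} (hf : IsTestFun f) : Integrable (fun x => f x ^ 2) μ := by
  obtain ⟨h, ⟨C, hC⟩, -⟩ := hf
  refine Integrable.of_bound (h.continuous.pow 2).aestronglyMeasurable (C ^ 2)
    (Eventually.of_forall fun x => ?_)
  rw [norm_pow]
  exact pow_le_pow_left₀ (norm_nonneg _) (hC x) 2

lemma IsTestFun.measurable_energy {n : ℕ} {f w : EuclideanSpace ℝ (Fin n) → ℝ}
    (hf : IsTestFun f) (hw : Measurable w) : Measurable fun x => ‖gradient f x‖ ^ 2 * w x := by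
  simp only [norm_gradient_eq]
  exact ((hf.1.continuous_fderiv (by norm_num)).norm.measurable.pow_const 2).mul hw

/-- Composition of a test function with a cutoff of its square at height `t`. -/
lemma IsTestFun.cutoff {n : ℕ} {f : EuclideanSpace ℝ (Fin n) → ℝ} (hf : IsTestFun f)
    {φ : ℝ → ℝ} (hφ : ContDiff ℝ 1 φ) (h0 : ∀ v, 0 ≤ φ v) (h1 : ∀ v, φ v ≤ 1)
    {M : ℝ} (hM : ∀ v, |deriv φ v| ≤ M) (t : ℝ) :
    IsTestFun (fun x => φ (f x ^ 2 / t)) ∧ ∀ x, ‖gradient (fun x => φ (f x ^ 2 / t)) x‖ =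
      |deriv φ (f x ^ 2 / t)| * |2 * f x / t| * ‖gradient f x‖ := by
  have hg : ∀ x, ‖gradient (fun x => φ (f x ^ 2 / t)) x‖ =
      |deriv φ (f x ^ 2 / t)| * |2 * f x / t| * ‖gradient f x‖ := by
    intro x
    have h1 : HasDerivAt (fun u : ℝ => φ (u ^ 2 / t))
        (deriv φ (f x ^ 2 / t) * (2 * f x / t)) (f x) := by
      have a : HasDerivAt φ (deriv φ (f x ^ 2 / t)) (f x ^ 2 / t) :=
        (hφ.differentiable (by norm_num) _).hasDerivAt
      have b : HasDerivAt (fun u : ℝ => u ^ 2 / t) (2 * f x / t) (f x) := by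
        simpa using (hasDerivAt_pow 2 (f x)).div_const t
      exact a.comp (f x) b
    have h2 := h1.comp_hasFDerivAt x (hf.1.differentiable (by norm_num) x).hasFDerivAt
    rw [norm_gradient_eq, norm_gradient_eq]
    have h3 := h2.fderiv
    simp only [Function.comp_def] at h3
    rw [h3, norm_smul, Real.norm_eq_abs, abs_mul]
  refine ⟨⟨hφ.comp ((hf.1.pow 2).div_const t), ⟨1, fun x => ?_⟩, ?_⟩, hg⟩
  · rw [abs_of_nonneg (h0 _)]; exact h1 _
  · obtain ⟨-, ⟨C, hC⟩, D, hD⟩ := hf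
    refine ⟨M * (2 * C / |t|) * D, fun x => ?_⟩
    rw [hg x, abs_div, abs_mul, abs_two]
    have hM0 : 0 ≤ M := (abs_nonneg _).trans (hM 0)
    have hC0 : 0 ≤ C := (abs_nonneg _).trans (hC x)
    gcongr
    exacts [hM _, hC x, hD x]

/-! ### The estimate at a fixed level -/

/-- Bound at level `t`: the capacity-type estimate
`ξ(εt) μ(f² ≥ t) ≤ (4M²/t) ∫_{εt ≤ f² ≤ t} |∇f|² w dμ`, obtained by testing the super Poincaré
inequality on a cutoff of `f²` between the heights `εt` and `t`. -/
lemma level_bound {n : ℕ} {μ : Measure (EuclideanSpace ℝ (Fin n))} [IsProbabilityMeasure μ]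
    {w : EuclideanSpace ℝ (Fin n) → ℝ} (hw0 : ∀ x, 0 ≤ w x) {β : ℝ → ℝ}
    (hβ : ∀ s > (0 : ℝ), 0 < β s)
    (hint : ∀ h, IsTestFun h → Integrable (fun x => ‖gradient h x‖ ^ 2 * w x) μ)
    (hSP : ∀ s > (0 : ℝ), ∀ h, IsTestFun h →
      ∫ x, h x ^ 2 ∂μ ≤ s * ∫ x, ‖gradient h x‖ ^ 2 * w x ∂μ + β s * (∫ x, |h x| ∂μ) ^ 2)
    {ε : ℝ} (hε : 0 < ε) {φ : ℝ → ℝ} (hφ : ContDiff ℝ 1 φ) (h0 : ∀ v, 0 ≤ φ v)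
    (h1 : ∀ v, φ v ≤ 1) (hz : ∀ v ≤ ε, φ v = 0) (ho : ∀ v, 1 ≤ v → φ v = 1)
    (hd : ∀ v, v ∉ Icc ε 1 → deriv φ v = 0) {M : ℝ} (hM : ∀ v, |deriv φ v| ≤ M)
    {f : EuclideanSpace ℝ (Fin n) → ℝ} (hf : IsTestFun f) (hnorm : ∫ x, f x ^ 2 ∂μ = 1)
    {t : ℝ} (ht : 0 < t) :
    ENNReal.ofReal (superRate β (ε * t)) * μ {x | t ≤ f x ^ 2} ≤
      ∫⁻ x, (Icc (f x ^ 2) (f x ^ 2 / ε)).indicator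
        (fun t => ENNReal.ofReal (4 * M ^ 2 * t⁻¹)) t *
          ENNReal.ofReal (‖gradient f x‖ ^ 2 * w x) ∂μ := by
  obtain ⟨hg, hgrad⟩ := hf.cutoff hφ h0 h1 hM t
  set g : EuclideanSpace ℝ (Fin n) → ℝ := fun x => φ (f x ^ 2 / t) with hgdef
  have het : 0 < ε * t := mul_pos hε ht
  set J := ∫ x, g x ^ 2 ∂μ with hJ
  set I := ∫ x, |g x| ∂μ with hI
  set E := ∫ x, ‖gradient g x‖ ^ 2 * w x ∂μ with hE
  have hE0 : 0 ≤ E := integral_nonneg fun x => mul_nonneg (sq_nonneg _) (hw0 x)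
  have hJ0 : 0 ≤ J := integral_nonneg fun x => sq_nonneg _
  -- Cauchy–Schwarz combined with Markov's inequality on the support of `g`.
  have hIJ : I ^ 2 * (ε * t) ≤ J := by
    have key : ∀ c : ℝ, 2 * c * I ≤ J + c ^ 2 / (ε * t) := by
      intro c
      have : ∫ x, 2 * c * |g x| ∂μ ≤ ∫ x, (g x ^ 2 + c ^ 2 / (ε * t) * f x ^ 2) ∂μ := by
        refine integral_mono (hg.integrable.abs.const_mul _)
          (hg.integrable_sq.add (hf.integrable_sq.const_mul _)) fun x => ?_
        dsimp only
        by_cases hx : f x ^ 2 / t ≤ ε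
        · have : g x = 0 := hz _ hx
          rw [this]; simp only [abs_zero, mul_zero]; positivity
        · have h2 : 1 ≤ f x ^ 2 / (ε * t) := by
            rw [one_le_div het]
            exact ((lt_div_iff₀ ht).1 (not_le.1 hx)).le
          have h3 : c ^ 2 * 1 ≤ c ^ 2 * (f x ^ 2 / (ε * t)) := by gcongr
          have h4 : c ^ 2 / (ε * t) * f x ^ 2 = c ^ 2 * (f x ^ 2 / (ε * t)) := by ring
          rw [h4]
          nlinarith [sq_nonneg (|g x| - c), sq_abs (g x)]
      rw [integral_const_mul, integral_add hg.integrable_sq (hf.integrable_sq.const_mul _),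
        integral_const_mul, hnorm, mul_one] at this
      exact this
    have h2 := key (I * (ε * t))
    have h3 : (I * (ε * t)) ^ 2 / (ε * t) = I ^ 2 * (ε * t) := by field_simp
    rw [h3] at h2
    nlinarith
  have hξ : superRate β (ε * t) * J ≤ E := by
    unfold superRate
    rw [Real.iSup_mul_of_nonneg hJ0]
    refine Real.iSup_le (fun r => ?_) hE0
    obtain ⟨r, hr⟩ := r
    dsimp only
    have hs := hSP r hr g hg
    have hb := hβ r hr
    have h2 : β r * I ^ 2 ≤ β r * (J / (ε * t)) := by
      gcongr; rwa [le_div_iff₀ het]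
    have h3 : (1 / r - β r / (r * (ε * t))) * J = (J - β r * (J / (ε * t))) / r := by
      field_simp
    rw [h3, div_le_iff₀ hr]
    linarith
  have hJμ : μ {x | t ≤ f x ^ 2} ≤ ENNReal.ofReal J := by
    rw [hJ, ofReal_integral_eq_lintegral_ofReal hg.integrable_sq
      (Eventually.of_forall fun x => sq_nonneg _)]
    have hm : MeasurableSet {x | t ≤ f x ^ 2} :=
      measurableSet_le measurable_const (hf.1.continuous.measurable.pow_const 2)
    rw [← lintegral_indicator_one hm]
    refine lintegral_mono fun x => ?_
    by_cases hx : x ∈ {x | t ≤ f x ^ 2}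
    · have : g x = 1 := ho _ ((one_le_div ht).2 hx)
      simp [indicator_of_mem hx, this]
    · simp [indicator_of_notMem hx]
  calc ENNReal.ofReal (superRate β (ε * t)) * μ {x | t ≤ f x ^ 2}
      ≤ ENNReal.ofReal (superRate β (ε * t)) * ENNReal.ofReal J := by gcongr
    _ = ENNReal.ofReal (superRate β (ε * t) * J) := (ENNReal.ofReal_mul' hJ0).symm
    _ ≤ ENNReal.ofReal E := ENNReal.ofReal_le_ofReal hξ
    _ = ∫⁻ x, ENNReal.ofReal (‖gradient g x‖ ^ 2 * w x) ∂μ :=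
        ofReal_integral_eq_lintegral_ofReal (hint g hg)
          (Eventually.of_forall fun x => mul_nonneg (sq_nonneg _) (hw0 x))
    _ ≤ _ := by
      refine lintegral_mono fun x => ?_
      dsimp only
      by_cases hx : t ∈ Icc (f x ^ 2) (f x ^ 2 / ε)
      · rw [indicator_of_mem hx, ← ENNReal.ofReal_mul (by positivity)]
        refine ENNReal.ofReal_le_ofReal ?_
        rw [hgrad x, ← mul_assoc]
        refine mul_le_mul_of_nonneg_right ?_ (hw0 x)
        rw [mul_pow, mul_pow, sq_abs, sq_abs]
        refine mul_le_mul_of_nonneg_right ?_ (sq_nonneg _)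
        have h2 : deriv φ (f x ^ 2 / t) ^ 2 ≤ M ^ 2 := by
          rw [← sq_abs]; exact pow_le_pow_left₀ (abs_nonneg _) (hM _) 2
        have h3 : (2 * f x / t) ^ 2 ≤ 4 * t⁻¹ := by
          have : (2 * f x / t) ^ 2 = 4 * f x ^ 2 / t * t⁻¹ := by field_simp; ring
          rw [this]
          gcongr
          rw [div_le_iff₀ ht]
          linarith [hx.1]
        calc _ ≤ M ^ 2 * (4 * t⁻¹) := by gcongr
          _ = _ := by ring
      · have : deriv φ (f x ^ 2 / t) = 0 := by
          refine hd _ fun h => hx ⟨?_, ?_⟩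
          · exact (div_le_one ht).1 h.2
          · rw [le_div_iff₀ hε, mul_comm]; exact (le_div_iff₀ ht).1 h.1
        rw [hgrad x, this]
        simp

/-! ### Integration over the levels -/

lemma ofReal_integral_le_lintegral {α : Type*} [MeasurableSpace α] (ν : Measure α) (g : α → ℝ) :
    ENNReal.ofReal (∫ x, g x ∂ν) ≤ ∫⁻ x, ENNReal.ofReal (g x) ∂ν := by
  by_cases hg : Integrable g ν
  · rw [integral_eq_lintegral_pos_part_sub_lintegral_neg_part hg]
    refine (ENNReal.ofReal_le_ofReal (sub_le_self _ ENNReal.toReal_nonneg)).trans ?_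
    exact ENNReal.ofReal_toReal_le
  · simp [integral_undef hg]

/-- The kernel `dt/t` has mass at most `log (1/ε)` on each interval `[a, a/ε]`. -/
lemma lintegral_log_kernel {ε : ℝ} (hε : ε ∈ Ioo (0 : ℝ) 1) {K : ℝ} (hK : 0 ≤ K) {a : ℝ}
    (ha : 0 ≤ a) :
    ∫⁻ t in Ioi 0, (Icc a (a / ε)).indicator (fun t => ENNReal.ofReal (K * t⁻¹)) t ≤
      ENNReal.ofReal (K * Real.log (1 / ε)) := by
  obtain ⟨h0, h1⟩ := hε
  have hae : a ≤ a / ε := by rw [le_div_iff₀ h0]; nlinarith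
  rw [lintegral_indicator measurableSet_Icc, Measure.restrict_restrict measurableSet_Icc]
  rcases ha.eq_or_lt with rfl | ha
  · simp
  have hs : Icc a (a / ε) ∩ Ioi 0 = Icc a (a / ε) :=
    inter_eq_left.2 fun t ht => ha.trans_le ht.1
  rw [hs]
  have hi : IntegrableOn (fun t : ℝ => K * t⁻¹) (Icc a (a / ε)) := by
    refine ContinuousOn.integrableOn_compact isCompact_Icc ?_
    exact continuousOn_const.mul (continuousOn_inv₀.mono fun t ht => (ha.trans_le ht.1).ne')
  rw [← ofReal_integral_eq_lintegral_ofReal hi]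
  · rw [integral_Icc_eq_integral_Ioc, ← intervalIntegral.integral_of_le hae,
      intervalIntegral.integral_const_mul, integral_inv_of_pos ha (by positivity)]
    apply le_of_eq
    congr 3
    field_simp
  · filter_upwards [ae_restrict_mem measurableSet_Icc] with t ht
    have : 0 < t := ha.trans_le ht.1
    simp only [Pi.zero_apply]; positivity

/-- The `F`-Sobolev inequality under the assumption that every test function has finite energy;
it holds without defect. Integrating `level_bound` in `t` gives the layer-cake formula on the left
and the kernel `dt/t` on `[f², f²/ε]` on the right. -/
lemma sobolev_of_finite_energy {n : ℕ} {μ : Measure (EuclideanSpace ℝ (Fin n))}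
    [IsProbabilityMeasure μ]
    {w : EuclideanSpace ℝ (Fin n) → ℝ} (hw : Measurable w) (hw0 : ∀ x, 0 ≤ w x) {β : ℝ → ℝ}
    (hβ : ∀ s > (0 : ℝ), 0 < β s)
    (hint : ∀ h, IsTestFun h → Integrable (fun x => ‖gradient h x‖ ^ 2 * w x) μ)
    (hSP : ∀ s > (0 : ℝ), ∀ h, IsTestFun h →
      ∫ x, h x ^ 2 ∂μ ≤ s * ∫ x, ‖gradient h x‖ ^ 2 * w x ∂μ + β s * (∫ x, |h x| ∂μ) ^ 2)
    {ε : ℝ} (hε : ε ∈ Ioo (0 : ℝ) 1) :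
    ∃ c ≥ (0 : ℝ), ∀ f : EuclideanSpace ℝ (Fin n) → ℝ, IsTestFun f → ∫ x, f x ^ 2 ∂μ = 1 →
      ∫ x, (∫ t in (0 : ℝ)..(f x) ^ 2, superRate β (ε * t)) ∂μ
        ≤ c * ∫ x, ‖gradient f x‖ ^ 2 * w x ∂μ := by
  obtain ⟨φ, hφ, h0, h1, hz, ho, hd, M, hM⟩ := exists_cutoff_s4 hε.2
  have hlog : 0 ≤ Real.log (1 / ε) := Real.log_nonneg (by
    rw [le_div_iff₀ hε.1]; linarith [hε.2])
  have hc : 0 ≤ 4 * M ^ 2 * Real.log (1 / ε) := by positivity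
  refine ⟨4 * M ^ 2 * Real.log (1 / ε), hc, fun f hf hnorm => ?_⟩
  have hE0 : 0 ≤ ∫ x, ‖gradient f x‖ ^ 2 * w x ∂μ :=
    integral_nonneg fun x => mul_nonneg (sq_nonneg _) (hw0 x)
  rw [← ENNReal.ofReal_le_ofReal_iff (mul_nonneg hc hE0)]
  have hfm : Measurable fun x => f x ^ 2 := hf.1.continuous.measurable.pow_const 2
  have hξ := (aemeasurable_superRate β hβ hε.1).ennreal_ofReal
  have hA : MeasurableSet {p : EuclideanSpace ℝ (Fin n) × ℝ | p.2 ≤ f p.1 ^ 2} :=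
    measurableSet_le measurable_snd (hfm.comp measurable_fst)
  have hB : MeasurableSet {p : EuclideanSpace ℝ (Fin n) × ℝ |
      p.2 ∈ Icc (f p.1 ^ 2) (f p.1 ^ 2 / ε)} :=
    (measurableSet_le (hfm.comp measurable_fst) measurable_snd).inter
      (measurableSet_le measurable_snd ((hfm.comp measurable_fst).div_const ε))
  calc ENNReal.ofReal (∫ x, (∫ t in (0 : ℝ)..(f x) ^ 2, superRate β (ε * t)) ∂μ)
      ≤ ∫⁻ x, ENNReal.ofReal (∫ t in (0 : ℝ)..(f x) ^ 2, superRate β (ε * t)) ∂μ :=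
        ofReal_integral_le_lintegral _ _
    _ ≤ ∫⁻ x, (∫⁻ t in Ioi 0, {p : EuclideanSpace ℝ (Fin n) × ℝ | p.2 ≤ f p.1 ^ 2}.indicator
          (fun p => ENNReal.ofReal (superRate β (ε * p.2))) (x, t)) ∂μ := by
        refine lintegral_mono fun x => ?_
        dsimp only
        rw [intervalIntegral.integral_of_le (sq_nonneg _)]
        refine (ofReal_integral_le_lintegral _ _).trans (le_of_eq ?_)
        have h2 : Ioc 0 (f x ^ 2) = Iic (f x ^ 2) ∩ Ioi 0 := by rw [inter_comm]; rfl
        rw [h2, ← Measure.restrict_restrict measurableSet_Iic,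
          ← lintegral_indicator measurableSet_Iic]
        rfl
    _ = ∫⁻ t in Ioi 0, ∫⁻ x, {p : EuclideanSpace ℝ (Fin n) × ℝ | p.2 ≤ f p.1 ^ 2}.indicator
          (fun p => ENNReal.ofReal (superRate β (ε * p.2))) (x, t) ∂μ := by
        refine lintegral_lintegral_swap ?_
        exact (hξ.comp_quasiMeasurePreserving Measure.quasiMeasurePreserving_snd).indicator hA
    _ ≤ ∫⁻ t in Ioi 0, ∫⁻ x, (Icc (f x ^ 2) (f x ^ 2 / ε)).indicator
        (fun t => ENNReal.ofReal (4 * M ^ 2 * t⁻¹)) t *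
          ENNReal.ofReal (‖gradient f x‖ ^ 2 * w x) ∂μ := by
        refine setLIntegral_mono' measurableSet_Ioi fun t ht => ?_
        refine le_trans (le_of_eq ?_)
          (level_bound hw0 hβ hint hSP hε.1 hφ h0 h1 hz ho hd hM hf hnorm ht)
        rw [← lintegral_indicator_const (measurableSet_le measurable_const hfm)]
        rfl
    _ = ∫⁻ x, (∫⁻ t in Ioi 0, (Icc (f x ^ 2) (f x ^ 2 / ε)).indicator
        (fun t => ENNReal.ofReal (4 * M ^ 2 * t⁻¹)) t *
          ENNReal.ofReal (‖gradient f x‖ ^ 2 * w x)) ∂μ := by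
        refine (lintegral_lintegral_swap ?_).symm
        have h2 : Measurable ({p : EuclideanSpace ℝ (Fin n) × ℝ |
            p.2 ∈ Icc (f p.1 ^ 2) (f p.1 ^ 2 / ε)}.indicator
            fun p => ENNReal.ofReal (4 * M ^ 2 * p.2⁻¹)) :=
          Measurable.indicator (by fun_prop) hB
        exact (h2.mul ((hf.measurable_energy hw).comp measurable_fst).ennreal_ofReal).aemeasurable
    _ ≤ ∫⁻ x, ENNReal.ofReal (4 * M ^ 2 * Real.log (1 / ε)) *
          ENNReal.ofReal (‖gradient f x‖ ^ 2 * w x) ∂μ := by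
        refine lintegral_mono fun x => ?_
        dsimp only
        rw [lintegral_mul_const' _ _ ENNReal.ofReal_ne_top]
        gcongr
        exact lintegral_log_kernel hε (by positivity) (sq_nonneg _)
    _ = _ := by
        rw [lintegral_const_mul' _ _ ENNReal.ofReal_ne_top, ENNReal.ofReal_mul hc,
          ofReal_integral_eq_lintegral_ofReal (hint f hf)
          (Eventually.of_forall fun x => mul_nonneg (sq_nonneg _) (hw0 x))]

/-! ### Test functions of infinite energy -/

/-- If some test function `k` has infinite energy, then `h + ηk` has infinite energy for `η ≠ 0`,
and the energy term in its super Poincaré inequality is the junk value `0`. Letting `η → 0` removes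
the energy term from the inequality for every `h`. -/
lemma poincare_of_infinite_energy {n : ℕ} {μ : Measure (EuclideanSpace ℝ (Fin n))}
    [IsProbabilityMeasure μ]
    {w : EuclideanSpace ℝ (Fin n) → ℝ} (hw : Measurable w) (hw0 : ∀ x, 0 ≤ w x) {b s : ℝ}
    (hb : 0 < b)
    (hSP : ∀ h, IsTestFun h →
      ∫ x, h x ^ 2 ∂μ ≤ s * ∫ x, ‖gradient h x‖ ^ 2 * w x ∂μ + b * (∫ x, |h x| ∂μ) ^ 2)
    {k : EuclideanSpace ℝ (Fin n) → ℝ} (hk : IsTestFun k)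
    (hkE : ¬ Integrable (fun x => ‖gradient k x‖ ^ 2 * w x) μ)
    {h : EuclideanSpace ℝ (Fin n) → ℝ} (hh : IsTestFun h) :
    ∫ x, h x ^ 2 ∂μ ≤ b * (∫ x, |h x| ∂μ) ^ 2 := by
  by_cases hhE : Integrable (fun x => ‖gradient h x‖ ^ 2 * w x) μ
  swap
  · simpa [integral_undef hhE] using hSP h hh
  have key : ∀ η : ℝ, η ≠ 0 →
      ∫ x, h x ^ 2 ∂μ + η * (2 * ∫ x, h x * k x ∂μ) + η ^ 2 * ∫ x, k x ^ 2 ∂μ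
        ≤ b * (∫ x, |h x| ∂μ + |η| * ∫ x, |k x| ∂μ) ^ 2 := by
    intro η hη
    have hfd : ∀ x, fderiv ℝ (fun x => h x + η * k x) x = fderiv ℝ h x + η • fderiv ℝ k x :=
      fun x => ((hh.1.differentiable (by norm_num) x).hasFDerivAt.add
        ((hk.1.differentiable (by norm_num) x).hasFDerivAt.const_mul η)).fderiv
    have hg : IsTestFun (fun x => h x + η * k x) := by
      obtain ⟨a1, ⟨C, hC⟩, C', hC'⟩ := hh
      obtain ⟨b1, ⟨D, hD⟩, D', hD'⟩ := hk
      refine ⟨a1.add (contDiff_const.mul b1), ⟨C + |η| * D, fun x => ?_⟩,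
        C' + |η| * D', fun x => ?_⟩
      · refine (abs_add_le _ _).trans ?_
        rw [abs_mul]
        have := hC x
        have := hD x
        gcongr
      · rw [norm_gradient_eq, hfd]
        refine (norm_add_le _ _).trans ?_
        rw [norm_smul, Real.norm_eq_abs, ← norm_gradient_eq, ← norm_gradient_eq]
        have := hC' x
        have := hD' x
        gcongr
    have hgE : ¬ Integrable (fun x => ‖gradient (fun x => h x + η * k x) x‖ ^ 2 * w x) μ := by
      intro hi
      refine hkE (((hi.add hhE).const_mul (2 / η ^ 2)).mono'
        (hk.measurable_energy hw).aestronglyMeasurable (Eventually.of_forall fun x => ?_))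
      rw [Real.norm_of_nonneg (mul_nonneg (sq_nonneg _) (hw0 x)), Pi.add_apply, ← add_mul,
        ← mul_assoc]
      refine mul_le_mul_of_nonneg_right ?_ (hw0 x)
      simp only [norm_gradient_eq]
      rw [hfd]
      have h1 : |η| * ‖fderiv ℝ k x‖ ≤
          ‖fderiv ℝ h x + η • fderiv ℝ k x‖ + ‖fderiv ℝ h x‖ := by
        rw [← Real.norm_eq_abs, ← norm_smul]
        calc ‖η • fderiv ℝ k x‖ = ‖(fderiv ℝ h x + η • fderiv ℝ k x) - fderiv ℝ h x‖ := by
              congr 1; abel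
          _ ≤ _ := norm_sub_le _ _
      have h2 : (|η| * ‖fderiv ℝ k x‖) ^ 2 ≤
          (‖fderiv ℝ h x + η • fderiv ℝ k x‖ + ‖fderiv ℝ h x‖) ^ 2 := by gcongr
      rw [mul_pow, sq_abs] at h2
      have h3 : 0 < η ^ 2 := by positivity
      rw [div_mul_eq_mul_div, le_div_iff₀ h3]
      nlinarith [sq_nonneg (‖fderiv ℝ h x + η • fderiv ℝ k x‖ - ‖fderiv ℝ h x‖)]
    have h1 := hSP _ hg
    rw [integral_undef hgE, mul_zero, zero_add] at h1
    have hhk : Integrable (fun x => h x * k x) μ := by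
      obtain ⟨D, hD⟩ := hk.2.1
      exact hh.integrable.mul_bdd (c := D) hk.1.continuous.aestronglyMeasurable
        (Eventually.of_forall hD)
    have h2 : ∫ x, (h x + η * k x) ^ 2 ∂μ =
        ∫ x, h x ^ 2 ∂μ + η * (2 * ∫ x, h x * k x ∂μ) + η ^ 2 * ∫ x, k x ^ 2 ∂μ := by
      rw [← integral_const_mul, ← integral_const_mul, ← integral_const_mul,
        ← integral_add hh.integrable_sq ((hhk.const_mul 2).const_mul η), ← integral_add
        (f := fun x => h x ^ 2 + η * (2 * (h x * k x)))
        (hh.integrable_sq.add ((hhk.const_mul 2).const_mul η)) (hk.integrable_sq.const_mul _)]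
      congr 1; ext x; ring
    have h3 : ∫ x, |h x + η * k x| ∂μ ≤ ∫ x, |h x| ∂μ + |η| * ∫ x, |k x| ∂μ := by
      rw [← integral_const_mul, ← integral_add hh.integrable.abs (hk.integrable.abs.const_mul _)]
      refine integral_mono hg.integrable.abs
        (hh.integrable.abs.add (hk.integrable.abs.const_mul _)) fun x => ?_
      dsimp only
      rw [← abs_mul]
      exact abs_add_le _ _
    have h4 : 0 ≤ ∫ x, |h x + η * k x| ∂μ := integral_nonneg fun x => abs_nonneg _
    rw [h2] at h1
    refine h1.trans ?_
    gcongr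
  have hl : Tendsto (fun η : ℝ =>
      ∫ x, h x ^ 2 ∂μ + η * (2 * ∫ x, h x * k x ∂μ) + η ^ 2 * ∫ x, k x ^ 2 ∂μ)
      (nhdsWithin 0 {0}ᶜ) (nhds (∫ x, h x ^ 2 ∂μ)) := by
    refine tendsto_nhdsWithin_of_tendsto_nhds ?_
    refine Continuous.tendsto' (by fun_prop) _ _ (by simp)
  have hr : Tendsto (fun η : ℝ => b * (∫ x, |h x| ∂μ + |η| * ∫ x, |k x| ∂μ) ^ 2)
      (nhdsWithin 0 {0}ᶜ) (nhds (b * (∫ x, |h x| ∂μ) ^ 2)) := by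
    refine tendsto_nhdsWithin_of_tendsto_nhds ?_
    refine Continuous.tendsto' (by fun_prop) _ _ (by simp)
  refine le_of_tendsto_of_tendsto hl hr ?_
  filter_upwards [self_mem_nhdsWithin] with η hη using key η hη

/-! ### The defective `F`-Sobolev inequality -/

/-- **Proposition 2.3 (2)**: a super weighted Poincaré inequality with rate `β_ω` implies a
defective weighted `F`-Sobolev inequality with
`F_ε(r) = (1/r) ∫₀^r ξ(εt) dt`, where `ξ(t) = sup_{r>0}(1/r − β_ω(r)/(rt))`. -/
theorem F_sobolev_of_super_weighted_poincare {n : ℕ}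
    (μ : Measure (EuclideanSpace ℝ (Fin n))) [IsProbabilityMeasure μ]
    (ω : EuclideanSpace ℝ (Fin n) → ℝ) (hω_meas : Measurable ω) (hω_one : ∀ x, 1 ≤ ω x)
    (βω : ℝ → ℝ) (hβω_pos : ∀ s > (0:ℝ), 0 < βω s) (hβω_anti : AntitoneOn βω (Set.Ioi 0))
    (hSP : ∀ s > (0:ℝ), ∀ f : EuclideanSpace ℝ (Fin n) → ℝ,
        ContDiff ℝ 1 f → (∃ C, ∀ x, |f x| ≤ C) → (∃ C, ∀ x, ‖gradient f x‖ ≤ C) →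
        ∫ x, (f x) ^ 2 ∂μ
          ≤ s * ∫ x, ‖gradient f x‖ ^ 2 * ω x ∂μ + βω s * (∫ x, |f x| ∂μ) ^ 2) :
    ∀ ε ∈ Set.Ioo (0:ℝ) 1, ∃ c₁ > (0:ℝ), ∃ c₂ > (0:ℝ),
      ∀ f : EuclideanSpace ℝ (Fin n) → ℝ,
        ContDiff ℝ 1 f → (∃ C, ∀ x, |f x| ≤ C) → (∃ C, ∀ x, ‖gradient f x‖ ≤ C) →
        ∫ x, (f x) ^ 2 ∂μ = 1 →
        ∫ x, (f x) ^ 2 *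
            ((1 / (f x) ^ 2) *
              ∫ t in (0:ℝ)..(f x) ^ 2,
                (⨆ r : {r : ℝ // 0 < r}, (1 / (r : ℝ) - βω r / (r * (ε * t))))) ∂μ
          ≤ c₁ * ∫ x, ‖gradient f x‖ ^ 2 * ω x ∂μ + c₂ := by
  intro ε hε
  have hSP' : ∀ s > (0 : ℝ), ∀ h, IsTestFun h →
      ∫ x, h x ^ 2 ∂μ ≤ s * ∫ x, ‖gradient h x‖ ^ 2 * ω x ∂μ + βω s * (∫ x, |h x| ∂μ) ^ 2 :=
    fun s hs h hh => hSP s hs h hh.1 hh.2.1 hh.2.2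
  have hω0 : ∀ x, 0 ≤ ω x := fun x => zero_le_one.trans (hω_one x)
  have hF : ∀ f : EuclideanSpace ℝ (Fin n) → ℝ, ∀ x, (f x) ^ 2 *
      ((1 / (f x) ^ 2) * ∫ t in (0:ℝ)..(f x) ^ 2,
        (⨆ r : {r : ℝ // 0 < r}, (1 / (r : ℝ) - βω r / (r * (ε * t))))) =
      ∫ t in (0:ℝ)..(f x) ^ 2, superRate βω (ε * t) := by
    intro f x
    by_cases hx : f x = 0
    · simp [hx]
    · rw [← mul_assoc, mul_one_div_cancel (pow_ne_zero 2 hx), one_mul]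
      rfl
  simp only [hF]
  by_cases hfin : ∀ h, IsTestFun h → Integrable (fun x => ‖gradient h x‖ ^ 2 * ω x) μ
  · obtain ⟨c, hc, H⟩ := sobolev_of_finite_energy hω_meas hω0 hβω_pos hfin hSP' hε
    refine ⟨c + 1, by positivity, 1, one_pos, fun f h1 h2 h3 hn => ?_⟩
    have hE0 : 0 ≤ ∫ x, ‖gradient f x‖ ^ 2 * ω x ∂μ :=
      integral_nonneg fun x => mul_nonneg (sq_nonneg _) (hω0 x)
    linarith [H f ⟨h1, h2, h3⟩ hn]
  · push Not at hfin
    obtain ⟨k, hk, hkE⟩ := hfin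
    -- The super Poincaré inequality then holds with the zero weight, so the left side is `≤ 0`.
    obtain ⟨c, hc, H⟩ := sobolev_of_finite_energy (μ := μ) (w := fun _ => 0) measurable_const
      (fun _ => le_rfl) hβω_pos (fun h hh => by simp)
      (fun s hs h hh => by
        simpa using poincare_of_infinite_energy hω_meas hω0 (hβω_pos s hs) (hSP' s hs) hk hkE hh) hε
    refine ⟨1, one_pos, 1, one_pos, fun f h1 h2 h3 hn => ?_⟩
    have hE0 : 0 ≤ ∫ x, ‖gradient f x‖ ^ 2 * ω x ∂μ :=
      integral_nonneg fun x => mul_nonneg (sq_nonneg _) (hω0 x)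
    have := H f ⟨h1, h2, h3⟩ hn
    simp only [mul_zero, integral_zero] at this
    linarith
end

section
/- Let V : ℝ^n → ℝ be a convex differentiable function such that ∫_{ℝ^n} e^{−V(x)} dx < ∞. Then: (1) for every x ∈ ℝ^n, x·∇V(x) ≥ V(x) − V(0); and (2) there exist δ > 0 and R > 0 such that V(x) − V(0) ≥ δ|x| for every x with |x| ≥ R. -/
/-!
Part (1) is convexity of `t ↦ V (t • x)` on the real line: the slope between `0` and `1` is at most
the derivative at `1`, which is `⟪x, ∇V(x)⟫`.

For part (2), the sublevel set `K = {V ≤ V 0 + 1}` is convex, contains a ball around the origin by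
continuity, and has finite volume because `e^{-V}` is integrable. Such a set is bounded
(`isBounded_of_convex_of_measure_lt_top`): if `K` contains `ball 0 r` and a point `x`, it contains
the ball of radius `r / 2` around `x / 2`, so points `x` far from the origin would put a fixed amount
of volume of `K` arbitrarily far away. Thus `V > V 0 + 1` on some sphere of radius `R`, and convexity
along rays turns this into linear growth with slope `1 / R` outside that sphere.
-/

open MeasureTheory Real Filter Set
open scoped RealInnerProductSpace

/-- The first-order condition for convexity, comparing the value at `x` with the value at `0`. -/
lemma ConvexOn.sub_zero_le_inner_gradient {n : ℕ} {V : EuclideanSpace ℝ (Fin n) → ℝ}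
    (hc : ConvexOn ℝ Set.univ V) (hd : Differentiable ℝ V) (x : EuclideanSpace ℝ (Fin n)) :
    V x - V 0 ≤ ⟪x, gradient V x⟫ := by
  have hline : ConvexOn ℝ Set.univ (fun t : ℝ => V (t • x)) :=
    hc.comp_linearMap (LinearMap.toSpanSingleton ℝ (EuclideanSpace ℝ (Fin n)) x)
  have hderiv : HasDerivAt (fun t : ℝ => V (t • x)) (fderiv ℝ V x x) 1 := by
    have h1 : HasDerivAt (fun t : ℝ => t • x) x 1 := by
      simpa using (hasDerivAt_id (1 : ℝ)).smul_const x
    have h2 : HasFDerivAt V (fderiv ℝ V x) ((1 : ℝ) • x) := by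
      simpa using (hd x).hasFDerivAt
    exact h2.comp_hasDerivAt 1 h1
  have h := hline.slope_le_of_hasDerivAt (mem_univ 0) (mem_univ 1) zero_lt_one hderiv
  simpa [slope_def_field] using h

lemma isBounded_of_convex_of_measure_lt_top {n : ℕ} {K : Set (EuclideanSpace ℝ (Fin n))}
    (hK : Convex ℝ K) {r : ℝ} (hr : 0 < r) (hball : Metric.ball 0 r ⊆ K)
    (hfin : volume K < ⊤) : Bornology.IsBounded K := by
  have : IsFiniteMeasure (volume.restrict K) := ⟨by simpa using hfin⟩
  set m := volume (Metric.ball (0 : EuclideanSpace ℝ (Fin n)) (r / 2)) with hm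
  have hm0 : m ≠ 0 := (Metric.measure_ball_pos _ _ (half_pos hr)).ne'
  have hmtop : m ≠ ⊤ := measure_ball_lt_top.ne
  -- Tightness of the finite measure `volume.restrict K`: little of `K` lies far from the origin.
  obtain ⟨C, hC, hCm⟩ := isTightMeasureSet_iff_exists_isCompact_measure_compl_le.1
    (isTightMeasureSet_singleton (μ := volume.restrict K)) (m / 2) (ENNReal.half_pos hm0)
  obtain ⟨M, hM⟩ := hC.isBounded.subset_closedBall 0
  refine (Metric.isBounded_closedBall (x := 0) (r := 2 * M + r)).subset fun x hx => ?_
  rw [mem_closedBall_zero_iff]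
  by_contra! hfar
  have hsub : Metric.ball ((1 / 2 : ℝ) • x) (r / 2) ⊆ Cᶜ ∩ K := by
    intro y hy
    rw [mem_ball_iff_norm] at hy
    constructor
    · intro hyC
      have h1 : ‖y‖ ≤ M := by simpa using hM hyC
      have h2 : ‖(1 / 2 : ℝ) • x‖ = 1 / 2 * ‖x‖ := by rw [norm_smul]; norm_num
      have h3 := norm_sub_norm_le ((1 / 2 : ℝ) • x) y
      rw [norm_sub_rev] at h3
      linarith
    · -- `y` is the midpoint of `x` and the point `2 y - x` of `ball 0 r`.
      have hz : (2 : ℝ) • (y - (1 / 2 : ℝ) • x) ∈ K := by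
        apply hball
        rw [mem_ball_zero_iff, norm_smul, Real.norm_ofNat]
        linarith
      have h := hK hx hz (a := 1 / 2) (b := 1 / 2) (by norm_num) (by norm_num) (by norm_num)
      convert h using 1
      module
  have hle : m ≤ m / 2 := by
    calc m = volume (Metric.ball ((1 / 2 : ℝ) • x) (r / 2)) := by
          rw [hm, Measure.addHaar_ball_center volume ((1 / 2 : ℝ) • x)]
      _ ≤ volume (Cᶜ ∩ K) := measure_mono hsub
      _ = volume.restrict K Cᶜ := (Measure.restrict_apply hC.measurableSet.compl).symm
      _ ≤ m / 2 := hCm _ rfl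
  exact absurd hle (not_le.2 (ENNReal.half_lt_self hm0 hmtop))

/-- **Lemma 3.1** (Bakry–Barthe–Cattiaux–Guillin): if `V` is convex, differentiable and
`∫ e^{−V} dx < ∞`, then (1) `x·∇V(x) ≥ V(x) − V(0)` for all `x`, and (2) there exist
`δ > 0` and `R > 0` such that `V(x) − V(0) ≥ δ|x|` whenever `|x| ≥ R`. -/
theorem convex_potential_lemma {n : ℕ}
    (V : EuclideanSpace ℝ (Fin n) → ℝ)
    (hV_conv : ConvexOn ℝ Set.univ V)
    (hV_diff : Differentiable ℝ V)
    (hV_int : Integrable (fun x => Real.exp (-V x))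
      (volume : Measure (EuclideanSpace ℝ (Fin n)))) :
    (∀ x, V x - V 0 ≤ ⟪x, gradient V x⟫) ∧
    (∃ δ > (0:ℝ), ∃ R > (0:ℝ), ∀ x : EuclideanSpace ℝ (Fin n),
      R ≤ ‖x‖ → δ * ‖x‖ ≤ V x - V 0) := by
  refine ⟨hV_conv.sub_zero_le_inner_gradient hV_diff, ?_⟩
  have hconv : Convex ℝ {x | V x ≤ V 0 + 1} := by
    simpa using hV_conv.convex_le (V 0 + 1)
  have hfin : volume {x | V x ≤ V 0 + 1} < ⊤ := by
    have h := hV_int.measure_ge_lt_top (Real.exp_pos (-(V 0 + 1)))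
    simpa only [Real.exp_le_exp, neg_le_neg_iff] using h
  obtain ⟨r, hr, hball⟩ : ∃ r > 0, Metric.ball 0 r ⊆ {x | V x ≤ V 0 + 1} := by
    apply Metric.mem_nhds_iff.1
    filter_upwards [hV_diff.continuous.continuousAt.eventually_lt_const (lt_add_one (V 0))]
      with x hx using hx.le
  obtain ⟨B, hB⟩ :=
    (isBounded_of_convex_of_measure_lt_top hconv hr hball hfin).exists_norm_le
  have hR : 0 < |B| + 1 := by positivity
  refine ⟨1 / (|B| + 1), by positivity, |B| + 1, hR, fun x hx => ?_⟩
  have hx0 : 0 < ‖x‖ := hR.trans_le hx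
  set t := (|B| + 1) / ‖x‖ with ht
  have ht0 : 0 < t := by positivity
  have ht1 : t ≤ 1 := (div_le_one hx0).2 hx
  -- `t • x` lies on the sphere of radius `|B| + 1`, outside the sublevel set.
  have hout : V 0 + 1 < V (t • x) := by
    by_contra! hle
    have h1 := hB _ hle
    have h2 : ‖t • x‖ = |B| + 1 := by
      rw [norm_smul, Real.norm_of_nonneg ht0.le, ht, div_mul_cancel₀ _ hx0.ne']
    linarith [le_abs_self B]
  have hray : V (t • x) ≤ (1 - t) * V 0 + t * V x := by
    simpa using hV_conv.2 (mem_univ 0) (mem_univ x) (sub_nonneg.2 ht1) ht0.le (by ring)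
  have hslope : 1 / t ≤ V x - V 0 := by
    rw [div_le_iff₀ ht0]
    linarith
  calc 1 / (|B| + 1) * ‖x‖ = 1 / t := by rw [ht]; field_simp
    _ ≤ V x - V 0 := hslope
end

section
/- Let V : ℝ^n → (0,∞) be a smooth positive convex function and α > 0 such that ∫ V(x)^{−(n+α)} dx < ∞, and let L f = Δf − (n+α)(∇V/V)·∇f. Then there exist k ∈ (2, α+2), constants c > 0, b > 0, R > 0, and a smooth function W : ℝ^n → [1,∞) with W(x) = |x|^k for all |x| sufficiently large, such that LW(x) ≤ −c·W(x)^{(k−2)/k} + b·1_{B(0,R)}(x) for every x ∈ ℝ^n. -/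
/-!
Take `k = 2 + α / 2` and let `W` be a smooth function `≥ 1` that equals `|x|^k` outside a ball
(`exists_smooth_extension`). Far from the origin `∇W = k |x|^{k-2} x` and
`ΔW = k (n + k - 2) |x|^{k-2}` (`hasFDerivAt_normSq_rpow`, `lap_normSq_rpow`), so that
`LW = k |x|^{k-2} (n + k - 2 - (n + α) x·∇V(x) / V(x))`.

Convexity gives `x·∇V(x) ≥ V(x) - V(0)` (`convex_sub_le_inner_gradient`), which bounds the bracket
by `k - 2 - α + (n + α) V(0) / V(x) = -α / 2 + (n + α) V(0) / V(x)`. Integrability of `V^{-(n+α)}`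
forces `V → ∞` at infinity (`eventually_ge_of_integrable_rpow_neg`; linear growth is not needed),
so for `|x|` large the bracket is at most `-α / 4` and
`LW ≤ -(k α / 4) |x|^{k-2} = -(k α / 4) W^{(k-2)/k}`. On the remaining ball all quantities are
continuous, hence bounded, and the indicator term absorbs them.

Powers of the norm are written as `(‖x‖ ^ 2) ^ p` with `p = k / 2`, because `‖x‖ ^ 2` is smooth
everywhere.
-/

open MeasureTheory Real Filter Set
open scoped RealInnerProductSpace

/-- The tangent hyperplane inequality `V x - V 0 ≤ ∇V(x)·x` for a convex function, obtained by
restricting `V` to the line through `0` and `x`. -/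
theorem convex_sub_le_inner_gradient {E : Type*} [NormedAddCommGroup E] [InnerProductSpace ℝ E]
    [CompleteSpace E]
    {V : E → ℝ} (hd : Differentiable ℝ V) (hc : ConvexOn ℝ Set.univ V) (x : E) :
    V x - V 0 ≤ ⟪gradient V x, x⟫ := by
  have hg : ConvexOn ℝ Set.univ (fun t : ℝ => V (t • x)) := by
    simpa [Function.comp_def] using hc.comp_linearMap (LinearMap.toSpanSingleton ℝ E x)
  have hx : HasDerivAt (fun t : ℝ => V (t • x)) (fderiv ℝ V x x) 1 := by
    have h1 : HasDerivAt (fun t : ℝ => t • x) x 1 := by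
      simpa using (hasDerivAt_id (1:ℝ)).smul_const x
    have h2 : HasFDerivAt V (fderiv ℝ V x) ((1:ℝ) • x) := by
      rw [one_smul]; exact (hd x).hasFDerivAt
    exact h2.comp_hasDerivAt (1:ℝ) h1
  have := hg.slope_le_of_hasDerivAt (mem_univ 0) (mem_univ 1) one_pos hx
  rw [gradient, InnerProductSpace.toDual_symm_apply]
  simpa [slope] using this

/-- If `V` is convex and `V^{-β}` is integrable then `V → ∞` at infinity. By Markov's inequality a
sublevel set `K` has finite volume, so the volume of `K` outside large balls tends to zero. As `K`
is convex and contains a ball of radius `r` about `0`, each point `x ∈ K` brings with it a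
ball of radius `r / 2` about `x / 2`, which rules out points of `K` far from the origin. -/
theorem eventually_ge_of_integrable_rpow_neg {n : ℕ} {V : EuclideanSpace ℝ (Fin n) → ℝ} (hcont : Continuous V)
    (hpos : ∀ x, 0 < V x) (hc : ConvexOn ℝ Set.univ V) {β : ℝ} (hβ : 0 ≤ β)
    (hint : Integrable (fun x => (V x) ^ (-β))) (M : ℝ) :
    ∃ R : ℝ, ∀ x, R ≤ ‖x‖ → M ≤ V x := by
  -- The level is raised above `V 0` so that `0` is an interior point of the sublevel set.
  set M' := max M (V 0 + 1) with hM'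
  have hM'pos : 0 < M' := lt_of_lt_of_le (by linarith [hpos 0]) (le_max_right M (V 0 + 1))
  set K : Set (EuclideanSpace ℝ (Fin n)) := {x | V x ≤ M'} with hK
  have hKc : Convex ℝ K := by simpa using hc.convex_le M'
  have hKm : MeasurableSet K := (isClosed_le hcont continuous_const).measurableSet
  have hKfin : volume K ≠ ⊤ := by
    have hlt := hint.measure_ge_lt_top (Real.rpow_pos_of_pos hM'pos (-β))
    refine ((measure_mono fun x hx => ?_).trans_lt hlt).ne
    exact Real.rpow_le_rpow_of_nonpos (hpos x) hx (by linarith)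
  obtain ⟨r, hr, hball⟩ : ∃ r > 0, Metric.ball 0 r ⊆ K := by
    have : ∀ᶠ x in nhds (0 : EuclideanSpace ℝ (Fin n)), V x < M' :=
      hcont.continuousAt.eventually (gt_mem_nhds (lt_of_lt_of_le (by linarith) (le_max_right M (V 0 + 1))))
    obtain ⟨r, hr, h⟩ := Metric.eventually_nhds_iff_ball.1 this
    exact ⟨r, hr, fun x hx => (h x hx).le⟩
  have htend : Tendsto (fun m : ℕ => volume (K \ Metric.ball 0 (m : ℝ))) atTop (nhds 0) := by
    have := tendsto_measure_iInter_atTop (μ := volume)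
      (s := fun m : ℕ => K \ Metric.ball (0 : EuclideanSpace ℝ (Fin n)) (m : ℝ))
      (fun m => (hKm.diff Metric.isOpen_ball.measurableSet).nullMeasurableSet)
      (fun i j hij => sdiff_subset_sdiff_right (Metric.ball_subset_ball (by exact_mod_cast hij)))
      ⟨0, ((measure_mono sdiff_subset).trans_lt hKfin.lt_top).ne⟩
    have he : (⋂ m : ℕ, K \ Metric.ball (0 : EuclideanSpace ℝ (Fin n)) (m : ℝ)) = ∅ := by
      refine eq_empty_of_forall_notMem fun x hx => ?_
      obtain ⟨m, hm⟩ := exists_nat_gt ‖x‖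
      exact (mem_iInter.1 hx m).2 (by simpa using hm)
    simpa [he, Function.comp_def] using this
  have hv : 0 < volume (Metric.ball (0 : EuclideanSpace ℝ (Fin n)) (r / 2)) :=
    Metric.measure_ball_pos _ _ (by positivity)
  obtain ⟨m, hm⟩ := (htend.eventually (gt_mem_nhds hv)).exists
  refine ⟨2 * m + r, fun x hx => ?_⟩
  by_contra! hlt
  have hxK : x ∈ K := hlt.le.trans (le_max_left _ _)
  refine absurd hm (not_lt.2 ?_)
  -- The ball of radius `r / 2` about `x / 2` lies in `K` and avoids the ball of radius `m`.
  rw [← Measure.addHaar_ball_center volume ((1/2 : ℝ) • x)]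
  refine measure_mono fun y hy => ⟨?_, ?_⟩
  · have hz : (2 : ℝ) • (y - (1/2 : ℝ) • x) ∈ K := hball (by
      rw [mem_ball_zero_iff, norm_smul]
      rw [Metric.mem_ball, dist_eq_norm] at hy
      norm_num; linarith)
    have := hKc hxK hz (a := 1/2) (b := 1/2) (by norm_num) (by norm_num) (by norm_num)
    convert this using 1
    module
  · rw [mem_ball_zero_iff, not_lt]
    rw [Metric.mem_ball, dist_eq_norm] at hy
    have h1 := norm_sub_norm_le ((1/2 : ℝ) • x) y
    rw [norm_sub_rev, norm_smul] at h1
    norm_num at h1 hy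
    linarith

theorem hasFDerivAt_normSq_rpow {n : ℕ} (p : ℝ) {x : EuclideanSpace ℝ (Fin n)} (hx : x ≠ 0) :
    HasFDerivAt (fun y : EuclideanSpace ℝ (Fin n) => (‖y‖ ^ 2) ^ p)
      ((2 * p * (‖x‖ ^ 2) ^ (p - 1)) • innerSL ℝ x) x := by
  have h := (hasStrictFDerivAt_norm_sq x).hasFDerivAt.rpow_const (p := p)
    (Or.inl (by positivity))
  refine h.congr_fderiv ?_
  ext v
  simp
  ring

/-- `Δ|x|^k = k (n + k - 2) |x|^{k-2}` away from the origin, with `k = 2 p`. -/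
theorem lap_normSq_rpow {n : ℕ} (p : ℝ) {x : EuclideanSpace ℝ (Fin n)} (hx : x ≠ 0) :
    lap (fun y : EuclideanSpace ℝ (Fin n) => (‖y‖ ^ 2) ^ p) x
      = 2 * p * (n + 2 * p - 2) * (‖x‖ ^ 2) ^ (p - 1) := by
  -- `innerSL` is conjugate-linear in its first argument; `B` is the same map with the plain
  -- linear type that `fderiv` expects.
  obtain ⟨B, hB⟩ : ∃ B : EuclideanSpace ℝ (Fin n) →L[ℝ] EuclideanSpace ℝ (Fin n) →L[ℝ] ℝ,
      ∀ v w, B v w = ⟪v, w⟫ := ⟨innerSL ℝ, fun _ _ => rfl⟩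
  have hB' : ∀ v, innerSL ℝ v = B v := fun v => by ext w; simp [hB]
  have hev : fderiv ℝ (fun y : EuclideanSpace ℝ (Fin n) => (‖y‖ ^ 2) ^ p) =ᶠ[nhds x]
      fun y => (2 * p * (‖y‖ ^ 2) ^ (p - 1)) • B y := by
    filter_upwards [isOpen_ne.mem_nhds hx] with y hy
    rw [(hasFDerivAt_normSq_rpow p hy).fderiv, hB']
  have h2 := ((hasFDerivAt_normSq_rpow (p - 1) hx).const_mul (2 * p)).smul (B.hasFDerivAt (x := x))
  have hq : (‖x‖ ^ 2) ^ (p - 1 - 1) * ‖x‖ ^ 2 = (‖x‖ ^ 2) ^ (p - 1) := by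
    rw [← Real.rpow_add_one (by positivity)]; congr 1; ring
  have hs : ∑ i, x i * x i = ‖x‖ ^ 2 := by
    rw [EuclideanSpace.real_norm_sq_eq]
    exact Finset.sum_congr rfl fun i _ => by ring
  have hi : ∀ i, iteratedFDeriv ℝ 2 (fun y : EuclideanSpace ℝ (Fin n) => (‖y‖ ^ 2) ^ p) x
      ![EuclideanSpace.single i 1, EuclideanSpace.single i 1]
      = 2 * p * (‖x‖ ^ 2) ^ (p - 1)
        + 2 * p * (2 * (p - 1) * (‖x‖ ^ 2) ^ (p - 1 - 1)) * (x i * x i) := by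
    intro i
    rw [iteratedFDeriv_two_apply, hev.fderiv_eq.trans h2.fderiv]
    simp [hB, EuclideanSpace.inner_single_right]
    ring
  unfold lap
  simp_rw [hi, Finset.sum_add_distrib, ← Finset.mul_sum, hs, ← hq]
  simp
  ring

theorem lap_congr {n : ℕ} {f g : EuclideanSpace ℝ (Fin n) → ℝ} {x} (h : f =ᶠ[nhds x] g) :
    lap f x = lap g x := by
  unfold lap
  rw [(h.iteratedFDeriv ℝ 2).eq_of_nhds]

theorem continuous_lap {n : ℕ} {f : EuclideanSpace ℝ (Fin n) → ℝ} (h : ContDiff ℝ (⊤ : ℕ∞) f) :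
    Continuous (lap f) := by
  unfold lap
  have h2 : Continuous (iteratedFDeriv ℝ 2 f) :=
    h.continuous_iteratedFDeriv (m := 2) ENat.LEInfty.out
  fun_prop

theorem continuous_gradient_of_contDiff {n : ℕ} {f : EuclideanSpace ℝ (Fin n) → ℝ}
    (h : ContDiff ℝ (⊤ : ℕ∞) f) : Continuous (gradient f) :=
  (InnerProductSpace.toDual ℝ (EuclideanSpace ℝ (Fin n))).symm.continuous.comp
    (h.continuous_fderiv (by simp))

/-- A smooth function `≥ 1` equal to `|x|^{2p}` outside a ball. The modification is done inside the
power: `|x|²` is replaced by `1 + s (|x|² - 1)`, where the smooth cutoff `s` is `0` for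
`|x| ≤ 1` and `1` for `|x|² ≥ 2`. This base is smooth and at least `1` everywhere, so that its
real powers are smooth as well. -/
theorem exists_smooth_extension {n : ℕ} {p : ℝ} (hp : 0 ≤ p) :
    ∃ W : EuclideanSpace ℝ (Fin n) → ℝ,
      ContDiff ℝ (⊤ : ℕ∞) W ∧ (∀ x, 1 ≤ W x) ∧ ∀ x, 2 ≤ ‖x‖ → W x = (‖x‖ ^ 2) ^ p := by
  have hu : ∀ x : EuclideanSpace ℝ (Fin n),
      1 ≤ 1 + Real.smoothTransition (‖x‖ ^ 2 - 1) * (‖x‖ ^ 2 - 1) := by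
    intro x
    rcases le_total (‖x‖ ^ 2 - 1) 0 with h | h
    · simp [Real.smoothTransition.zero_of_nonpos h]
    · have := mul_nonneg (Real.smoothTransition.nonneg (‖x‖ ^ 2 - 1)) h
      linarith
  refine ⟨fun x => (1 + Real.smoothTransition (‖x‖ ^ 2 - 1) * (‖x‖ ^ 2 - 1)) ^ p, ?_, ?_, ?_⟩
  · refine ContDiff.rpow_const_of_ne ?_ fun x => (by linarith [hu x])
    have hq : ContDiff ℝ (⊤ : ℕ∞) fun x : EuclideanSpace ℝ (Fin n) => ‖x‖ ^ 2 - 1 :=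
      (contDiff_norm_sq ℝ).sub contDiff_const
    exact contDiff_const.add ((Real.smoothTransition.contDiff.comp hq).mul hq)
  · exact fun x => Real.one_le_rpow (hu x) hp
  · intro x hx
    have : 1 ≤ ‖x‖ ^ 2 - 1 := by nlinarith
    simp [Real.smoothTransition.one_of_one_le this]

theorem lyapunov_cauchy_type {n : ℕ}
    (V : EuclideanSpace ℝ (Fin n) → ℝ)
    (hV_smooth : ContDiff ℝ (⊤ : ℕ∞) V) (hV_pos : ∀ x, 0 < V x)
    (hV_conv : ConvexOn ℝ Set.univ V)
    (α : ℝ) (hα : 0 < α)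
    (hV_int : Integrable (fun x => (V x) ^ (-((n : ℝ) + α)))
      (volume : Measure (EuclideanSpace ℝ (Fin n)))) :
    ∃ k ∈ Set.Ioo (2:ℝ) (α + 2), ∃ c > (0:ℝ), ∃ b > (0:ℝ), ∃ R > (0:ℝ),
      ∃ W : EuclideanSpace ℝ (Fin n) → ℝ,
        ContDiff ℝ (⊤ : ℕ∞) W ∧ (∀ x, 1 ≤ W x) ∧
        (∃ R' : ℝ, ∀ x : EuclideanSpace ℝ (Fin n), R' ≤ ‖x‖ → W x = ‖x‖ ^ k) ∧
        (∀ x, lap W x - ((n : ℝ) + α) / V x * ⟪gradient V x, gradient W x⟫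
            ≤ -c * (W x) ^ ((k - 2) / k)
              + b * (Metric.ball (0 : EuclideanSpace ℝ (Fin n)) R).indicator
                  (fun _ => (1:ℝ)) x) := by
  -- `k = 2 p = 2 + α / 2` is the midpoint of the admissible interval.
  set p : ℝ := 1 + α / 4 with hp
  have hp0 : 0 < p := by positivity
  have hnα : 0 < (n : ℝ) + α := by positivity
  obtain ⟨W, hWs, hW1, hWe⟩ := exists_smooth_extension (n := n) hp0.le
  -- Beyond `R₀` the error term `(n + α) V(0) / V(x)` is at most `α / 4`.
  obtain ⟨R₀, hR₀⟩ := eventually_ge_of_integrable_rpow_neg hV_smooth.continuous hV_pos hV_conv hnα.le hV_int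
    (4 * (n + α) * V 0 / α)
  -- `3` exceeds the radius `2` beyond which `W` is the power, so there `W` agrees with the power
  -- on a neighbourhood.
  set R := max R₀ 3 with hR
  have hcontF : Continuous fun x => lap W x - ((n : ℝ) + α) / V x * ⟪gradient V x, gradient W x⟫
      + p * α / 2 * (W x) ^ ((2 * p - 2) / (2 * p)) := by
    have h1 := continuous_lap hWs
    have h2 := continuous_gradient_of_contDiff hWs
    have h3 := continuous_gradient_of_contDiff hV_smooth
    have h4 : Continuous fun x => (W x) ^ ((2 * p - 2) / (2 * p)) :=
      hWs.continuous.rpow_const fun x => Or.inl (by linarith [hW1 x])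
    exact (h1.sub ((continuous_const.div hV_smooth.continuous fun x => (hV_pos x).ne').mul
      (h3.inner h2))).add (continuous_const.mul h4)
  obtain ⟨b, hb⟩ := (isCompact_closedBall (0 : EuclideanSpace ℝ (Fin n)) R).bddAbove_image
    hcontF.continuousOn
  refine ⟨2 * p, ⟨by linarith, by linarith⟩, p * α / 2, by positivity, max b 1, by positivity,
    R, by positivity, W, hWs, hW1, ⟨2, fun x hx => ?_⟩, fun x => ?_⟩
  · rw [hWe x hx, ← Real.rpow_natCast, ← Real.rpow_mul (norm_nonneg x)]
    norm_num
  by_cases hx : x ∈ Metric.ball (0 : EuclideanSpace ℝ (Fin n)) R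
  · have := hb (mem_image_of_mem _ (Metric.ball_subset_closedBall hx))
    rw [indicator_of_mem hx]
    linarith [le_max_left b 1]
  · rw [indicator_of_notMem hx]
    rw [mem_ball_zero_iff, not_lt] at hx
    have hx3 : 3 ≤ ‖x‖ := (le_max_right _ _).trans hx
    have hx0 : x ≠ 0 := norm_pos_iff.1 (by linarith)
    have hev : W =ᶠ[nhds x] fun y => (‖y‖ ^ 2) ^ p := by
      have : ∀ᶠ y in nhds x, 2 < ‖y‖ :=
        continuous_norm.continuousAt.eventually (lt_mem_nhds (by linarith))
      filter_upwards [this] with y hy using hWe y hy.le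
    have hgrad : ⟪gradient V x, gradient W x⟫
        = 2 * p * (‖x‖ ^ 2) ^ (p - 1) * ⟪gradient V x, x⟫ := by
      rw [real_inner_comm, gradient, InnerProductSpace.toDual_symm_apply, hev.fderiv_eq,
        (hasFDerivAt_normSq_rpow p hx0).fderiv]
      simp
    have hWpow : (W x) ^ ((2 * p - 2) / (2 * p)) = (‖x‖ ^ 2) ^ (p - 1) := by
      rw [hWe x (by linarith), ← Real.rpow_mul (by positivity)]
      congr 1
      field_simp
    rw [lap_congr hev, lap_normSq_rpow p hx0, hgrad, hWpow]
    have hq : 0 < (‖x‖ ^ 2) ^ (p - 1) := by positivity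
    have hV := hV_pos x
    have hconv := convex_sub_le_inner_gradient (hV_smooth.differentiable (by simp)) hV_conv x
    have hbig := hR₀ x ((le_max_left _ _).trans hx)
    rw [div_le_iff₀ hα] at hbig
    have hkey : n + α - α / 4 ≤ (n + α) / V x * ⟪gradient V x, x⟫ := by
      rw [div_mul_eq_mul_div, le_div_iff₀ hV]
      have := mul_le_mul_of_nonneg_left hconv hnα.le
      linarith
    have hfin := mul_le_mul_of_nonneg_left hkey (by positivity : 0 ≤ 2 * p * (‖x‖ ^ 2) ^ (p - 1))
    have hp' : 2 * p * (n + 2 * p - 2) * (‖x‖ ^ 2) ^ (p - 1)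
       = 2 * p * (‖x‖ ^ 2) ^ (p - 1) * (n + α / 2) := by
      rw [show (n : ℝ) + 2 * p - 2 = n + α / 2 by rw [hp]; ring]; ring
    rw [hp']
    linarith
end
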